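/- Assume the Riemann Hypothesis. Then there exists a constant C > 0 such that for all integers n ≥ 2, | λ_n − ( (n/2) log n + ( (γ − 1)/2 − (1/2) log(2π) ) n ) | ≤ C √n log n, where λ_n is the n-th Li coefficient of the Riemann zeta function. (The asymptotic formula of Theorem 4.1 specialized to F = ζ, with d_ζ = 1, Q_ζ = π^{−1/2}, λ = 1/2, recovering Voros's asymptotic.) -/

import Mathlib

open Complex

/-- The Riemann xi function `ξ(s) = s(s-1)π^{-s/2}Γ(s/2)ζ(s)`, written as the entire
function `s(s-1)Λ₀(s) + 1` where `Λ₀` is the completed Riemann zeta function. -/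
noncomputable def riemannXi (s : ℂ) : ℂ := s * (s - 1) * completedRiemannZeta₀ s + 1

/-- The `n`-th Li coefficient `λ_n = (1/(n-1)!) dⁿ/dsⁿ [s^{n-1} log ξ(s)]` at `s = 1`. -/
noncomputable def liCoeff (n : ℕ) : ℂ :=
  (1 / ((n - 1).factorial : ℂ)) *
    iteratedDeriv n (fun s => s ^ (n - 1) * Complex.log (riemannXi s)) 1

/-!
Substituting `s = 1 / (1 - z)` turns `λ_n` into the `n`-th Maclaurin coefficient of
`s (s - 1) ξ'/ξ(s) = z / (1 - z) ^ 2 * ξ'/ξ(s)`, a function which under RH is holomorphic on the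
unit disc, the image of which is the half-plane `Re s > 1 / 2`. Stirling's formula suggests the
splitting `ξ'/ξ(s) = (log s - log 2π) / 2 + E(s)`. The coefficients coming from the main term are
explicit, with `n` times the `n`-th harmonic number producing `n log n + γ n`.

For the error term, `Re ξ'/ξ` is bounded below on `Re s > 1 / 2`: by the functional equation
`ξ(s - a) / ξ(s + a)` is unimodular on the critical line, so Phragmén–Lindelöf bounds it by
`exp (2 K a)` to the right of that line, and `a → 0` gives the bound. Together with
Borel–Carathéodory this yields `Re (s (s - 1) E(s)) ≤ C log (2 + |s|) / (1 - Re z)`. A one-sided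
bound on the real part over the circle `|z| = r` controls the `n`-th coefficient, and for
`1 - r ^ 2 = 1 / (4 n)` the logarithm is `O(log n)` while the average of `1 / (1 - Re z)` over the
circle is exactly `1 / √(1 - r ^ 2) = 2 √n`.
-/

section Digamma

open Filter Topology MeasureTheory Metric

lemma tendsto_deriv_of_norm_le_of_tendsto {ι E : Type*} [NormedAddCommGroup E] [NormedSpace ℂ E]
    [CompleteSpace E] {l : Filter ι} [l.IsCountablyGenerated] {F : ι → ℂ → E} {f : ℂ → E} {c : ℂ}
    {r B : ℝ} (hr : 0 < r) (hF : ∀ᶠ i in l, DifferentiableOn ℂ (F i) (closedBall c r))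
    (hf : DifferentiableOn ℂ f (closedBall c r))
    (hB : ∀ᶠ i in l, ∀ z ∈ sphere c r, ‖F i z‖ ≤ B)
    (hlim : ∀ z ∈ sphere c r, Tendsto (fun i ↦ F i z) l (𝓝 (f z))) :
    Tendsto (fun i ↦ deriv (F i) c) l (𝓝 (deriv f c)) := by
  have cauchy {g : ℂ → E} (hg : DifferentiableOn ℂ g (closedBall c r)) :
      (2 * Real.pi * I : ℂ)⁻¹ • ∮ z in C(c, r), (z - c) ^ (-2 : ℤ) • g z = deriv g c := by
    rw [inv_smul_eq_iff₀ two_pi_I_ne_zero]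
    simpa using hg.deriv_eq_smul_circleIntegral hr
  have hmem (θ : ℝ) : circleMap c r θ ∈ sphere c r := circleMap_mem_sphere c hr.le θ
  rw [← cauchy hf]
  refine Tendsto.congr' (hF.mono fun i hi ↦ cauchy hi) (Tendsto.const_smul ?_ _)
  refine intervalIntegral.tendsto_integral_filter_of_dominated_convergence
    (fun _ ↦ r * (r ^ (-2 : ℤ) * B)) ?_ ?_ intervalIntegrable_const
    (ae_of_all _ fun θ _ ↦ ((hlim _ (hmem θ)).const_smul _).const_smul _)
  · filter_upwards [hF] with i hi
    refine Continuous.aestronglyMeasurable ?_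
    have hcont : Continuous fun θ ↦ F i (circleMap c r θ) :=
      hi.continuousOn.comp_continuous (continuous_circleMap c r)
        fun θ ↦ sphere_subset_closedBall (hmem θ)
    have hpow : Continuous fun θ ↦ (circleMap c r θ - c) ^ (-2 : ℤ) :=
      Continuous.zpow₀ (by fun_prop) _ fun θ ↦ Or.inl (by simp [circleMap, hr.ne'])
    simp only [deriv_circleMap]
    exact ((continuous_circleMap 0 r).mul_const I).smul (hpow.smul hcont)
  · filter_upwards [hB] with i hi
    refine ae_of_all _ fun θ _ ↦ ?_
    have hnorm : ‖circleMap c r θ - c‖ = r := by simpa using hmem θ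
    rw [norm_smul, norm_smul, norm_zpow, hnorm, deriv_circleMap, norm_mul, norm_circleMap_zero,
      norm_I, abs_of_pos hr, mul_one]
    gcongr
    exact hi _ (hmem θ)

lemma norm_GammaSeq_le {s : ℂ} (hs : 0 < s.re) {n : ℕ} (hn : n ≠ 0) :
    ‖GammaSeq s n‖ ≤ Real.Gamma s.re := by
  rw [GammaSeq_eq_approx_Gamma_integral hs hn, Real.Gamma_eq_integral hs,
    intervalIntegral.integral_of_le n.cast_nonneg]
  have hint : IntegrableOn (fun x : ℝ ↦ Real.exp (-x) * x ^ (s.re - 1)) (Set.Ioi 0) :=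
    Real.GammaIntegral_convergent hs
  calc ‖∫ x : ℝ in Set.Ioc 0 (n : ℝ), ((1 - x / n) ^ n : ℝ) * (x : ℂ) ^ (s - 1)‖
      ≤ ∫ x in Set.Ioc (0 : ℝ) n, Real.exp (-x) * x ^ (s.re - 1) := by
        refine norm_integral_le_of_norm_le (hint.mono_set Set.Ioc_subset_Ioi_self)
          ((ae_restrict_iff' measurableSet_Ioc).mpr (ae_of_all _ fun x hx ↦ ?_))
        have hx' : 0 ≤ 1 - x / n := by
          rw [sub_nonneg, div_le_one (by positivity)]
          exact hx.2
        rw [norm_mul, norm_real, norm_cpow_eq_rpow_re_of_pos hx.1,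
          Real.norm_of_nonneg (pow_nonneg hx' n), sub_re, one_re]
        gcongr
        · exact Real.rpow_nonneg hx.1.le _
        · exact Real.one_sub_div_pow_le_exp_neg hx.2
    _ ≤ ∫ x in Set.Ioi (0 : ℝ), Real.exp (-x) * x ^ (s.re - 1) :=
        setIntegral_mono_set hint
          ((ae_restrict_iff' measurableSet_Ioi).mpr (ae_of_all _ fun x hx ↦
            mul_nonneg (Real.exp_pos _).le (Real.rpow_nonneg (le_of_lt hx) _)))
          Set.Ioc_subset_Ioi_self.eventuallyLE

lemma hasDerivAt_GammaSeq {s : ℂ} (hs : ∀ k : ℕ, s + k ≠ 0) {n : ℕ} (hn : n ≠ 0) :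
    HasDerivAt (fun z ↦ GammaSeq z n)
      (GammaSeq s n * (log n - ∑ k ∈ Finset.range (n + 1), 1 / (s + k))) s := by
  have hnum : HasDerivAt (fun z : ℂ ↦ (n : ℂ) ^ z * (n.factorial : ℂ))
      ((n : ℂ) ^ s * log n * n.factorial) s := by
    simpa using ((hasDerivAt_id s).const_cpow
      (Or.inl (Nat.cast_ne_zero.mpr hn))).mul_const (n.factorial : ℂ)
  have hden : HasDerivAt (fun z : ℂ ↦ ∏ j ∈ Finset.range (n + 1), (z + j))
      ((∏ j ∈ Finset.range (n + 1), (s + j)) * ∑ k ∈ Finset.range (n + 1), 1 / (s + k)) s := by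
    convert! HasDerivAt.fun_finsetProd (u := Finset.range (n + 1))
      (f := fun j (z : ℂ) ↦ z + (j : ℂ)) (f' := fun _ ↦ 1)
      fun i _ ↦ (hasDerivAt_id s).add_const _ using 1
    rw [Finset.mul_sum]
    refine Finset.sum_congr rfl fun k hk ↦ ?_
    rw [← Finset.mul_prod_erase _ _ hk, smul_eq_mul, mul_one]
    have := hs k
    field_simp
  have hprod : ∏ j ∈ Finset.range (n + 1), (s + j) ≠ 0 :=
    Finset.prod_ne_zero_iff.mpr fun k _ ↦ hs k
  unfold GammaSeq
  convert! hnum.div hden hprod using 1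
  field_simp

lemma add_natCast_ne_zero_of_re_pos {s : ℂ} (hs : 0 < s.re) (k : ℕ) : s + k ≠ 0 := by
  intro h
  have hre := congrArg re h
  rw [add_re, natCast_re, zero_re] at hre
  linarith [k.cast_nonneg (α := ℝ)]

lemma differentiableAt_Gamma_of_re_pos {s : ℂ} (hs : 0 < s.re) : DifferentiableAt ℂ Gamma s :=
  differentiableAt_Gamma s fun m h ↦
    add_natCast_ne_zero_of_re_pos hs m (eq_neg_iff_add_eq_zero.mp h)

lemma tendsto_deriv_GammaSeq {s : ℂ} (hs : 0 < s.re) :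
    Tendsto (fun n : ℕ ↦ deriv (fun z ↦ GammaSeq z n) s) atTop (𝓝 (deriv Gamma s)) := by
  have hr : 0 < s.re / 2 := by positivity
  have hre {z : ℂ} (hz : z ∈ closedBall s (s.re / 2)) :
      z.re ∈ Set.Icc (s.re / 2) (3 * s.re / 2) := by
    have h := abs_le.mp ((abs_re_le_norm (z - s)).trans (mem_closedBall_iff_norm.mp hz))
    rw [sub_re] at h
    constructor <;> linarith [h.1, h.2]
  have hpos {z : ℂ} (hz : z ∈ closedBall s (s.re / 2)) : 0 < z.re := hr.trans_le (hre hz).1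
  obtain ⟨B, hB⟩ : ∃ B, ∀ x ∈ Set.Icc (s.re / 2) (3 * s.re / 2), ‖Real.Gamma x‖ ≤ B :=
    isCompact_Icc.exists_bound_of_continuousOn fun x hx ↦
      (Real.differentiableAt_Gamma fun m ↦ ((neg_nonpos.mpr m.cast_nonneg).trans_lt
        (hr.trans_le hx.1)).ne').continuousAt.continuousWithinAt
  refine tendsto_deriv_of_norm_le_of_tendsto (B := B) hr ?_ ?_ ?_
    fun z _ ↦ GammaSeq_tendsto_Gamma z
  · filter_upwards [eventually_ne_atTop 0] with n hn z hz
    exact (hasDerivAt_GammaSeq (add_natCast_ne_zero_of_re_pos (hpos hz))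
      hn).differentiableAt.differentiableWithinAt
  · exact fun z hz ↦ (differentiableAt_Gamma_of_re_pos (hpos hz)).differentiableWithinAt
  · filter_upwards [eventually_ne_atTop 0] with n hn z hz
    have hz' := sphere_subset_closedBall hz
    exact (norm_GammaSeq_le (hpos hz') hn).trans ((le_abs_self _).trans (hB _ (hre hz')))

lemma tendsto_log_sub_sum_digamma {s : ℂ} (hs : 0 < s.re) :
    Tendsto (fun n : ℕ ↦ log n - ∑ k ∈ Finset.range (n + 1), 1 / (s + k)) atTop
      (𝓝 (digamma s)) := by
  have hΓ : Gamma s ≠ 0 := Gamma_ne_zero_of_re_pos hs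
  rw [digamma_def, logDeriv_apply]
  refine ((tendsto_deriv_GammaSeq hs).div (GammaSeq_tendsto_Gamma s) hΓ).congr' ?_
  filter_upwards [eventually_ne_atTop 0, (GammaSeq_tendsto_Gamma s).eventually_ne hΓ] with n hn h
  rw [Pi.div_apply, (hasDerivAt_GammaSeq (add_natCast_ne_zero_of_re_pos hs) hn).deriv,
    mul_div_cancel_left₀ _ h]

lemma norm_le_norm_add_ofReal {w : ℂ} (hw : 0 ≤ w.re) {t : ℝ} (ht : 0 ≤ t) :
    ‖w‖ ≤ ‖w + t‖ := by
  rw [norm_def, norm_def]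
  refine Real.sqrt_le_sqrt ?_
  simp only [normSq_apply, add_re, ofReal_re, add_im, ofReal_im]
  nlinarith

lemma norm_log_add_one_sub_log_sub_inv_le {w : ℂ} (hw : 0 < w.re) :
    ‖log (w + 1) - log w - 1 / w‖ ≤ 1 / ‖w‖ ^ 2 := by
  have hw0 : w ≠ 0 := by simpa using add_natCast_ne_zero_of_re_pos hw 0
  have hmem {t : ℝ} (ht : 0 ≤ t) : w + t ∈ slitPlane :=
    Or.inl (by rw [add_re, ofReal_re]; linarith)
  have hderiv : ∀ t ∈ Set.Icc (0 : ℝ) 1, HasDerivWithinAt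
      (fun t : ℝ ↦ log (w + t) - t / w) (1 / (w + t) - 1 / w) (Set.Icc 0 1) t := by
    intro t ht
    have hlin : HasDerivAt (fun t : ℝ ↦ w + (t : ℂ)) 1 t := by
      simpa using (hasDerivAt_id t).ofReal_comp.const_add w
    have hdiv : HasDerivAt (fun t : ℝ ↦ (t : ℂ) / w) (1 / w) t := by
      simpa using (hasDerivAt_id t).ofReal_comp.div_const w
    exact ((hlin.clog_real (hmem ht.1)).sub hdiv).hasDerivWithinAt
  have hbound : ∀ t ∈ Set.Ico (0 : ℝ) 1, ‖1 / (w + t) - 1 / w‖ ≤ 1 / ‖w‖ ^ 2 := by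
    intro t ht
    have hwt : w + t ≠ 0 := slitPlane_ne_zero (hmem ht.1)
    have hnorm := norm_le_norm_add_ofReal hw.le ht.1
    rw [div_sub_div _ _ hwt hw0, show 1 * w - (w + t) * 1 = -(t : ℂ) by ring, norm_div, norm_neg,
      norm_real, norm_mul, Real.norm_of_nonneg ht.1, sq]
    gcongr
    exact ht.2.le
  have h := norm_image_sub_le_of_norm_deriv_le_segment_01' hderiv hbound
  rw [sub_right_comm]
  simpa using h

lemma norm_inv_sub_log_sub_log_le {w : ℂ} (hw : 1 / 4 ≤ w.re) {x : ℝ} (hx : 1 / 4 ≤ x)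
    (hxw : x ^ 2 ≤ 2 * ‖w‖ ^ 2) :
    ‖1 / w - (log (w + 1) - log w)‖ ≤ 10 / x - 10 / (x + 1) := by
  have hw0 : 0 < w.re := by linarith
  have hx0 : 0 < x := by linarith
  have hnorm : 0 < ‖w‖ := hw0.trans_le (re_le_norm w)
  calc ‖1 / w - (log (w + 1) - log w)‖ = ‖log (w + 1) - log w - 1 / w‖ := norm_sub_rev _ _
    _ ≤ 1 / ‖w‖ ^ 2 := norm_log_add_one_sub_log_sub_inv_le hw0
    _ ≤ 2 / x ^ 2 := by
      rw [div_le_div_iff₀ (by positivity) (by positivity)]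
      linarith
    _ ≤ 10 / x - 10 / (x + 1) := by
      rw [div_sub_div _ _ (by positivity) (by positivity),
        div_le_div_iff₀ (by positivity) (by positivity)]
      nlinarith [mul_nonneg (sq_nonneg x) (by linarith : 0 ≤ 8 * x - 2)]

lemma sq_norm_add_natCast_le {s : ℂ} (hs : 0 ≤ s.re) (k : ℕ) :
    (‖s‖ + k) ^ 2 ≤ 2 * ‖s + k‖ ^ 2 := by
  have h : ‖s + k‖ ^ 2 = ‖s‖ ^ 2 + 2 * s.re * k + k ^ 2 := by
    simp only [Complex.sq_norm, normSq_apply, add_re, natCast_re, add_im, natCast_im]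
    ring
  rw [h]
  nlinarith [sq_nonneg (‖s‖ - k), mul_nonneg hs k.cast_nonneg]

lemma norm_sum_inv_sub_log_sub_log_le {s : ℂ} (hs : 1 / 4 ≤ s.re) (n : ℕ) :
    ‖∑ k ∈ Finset.range n, 1 / (s + k) - (log (s + n) - log s)‖ ≤ 10 / ‖s‖ := by
  have hnorm : 1 / 4 ≤ ‖s‖ := hs.trans (re_le_norm s)
  have htel : log (s + n) - log s =
      ∑ k ∈ Finset.range n, (log (s + k + 1) - log (s + k)) := by
    simpa [add_assoc] using (Finset.sum_range_sub (fun k : ℕ ↦ log (s + k)) n).symm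
  have hterm (k : ℕ) : ‖1 / (s + k) - (log (s + k + 1) - log (s + k))‖ ≤
      10 / (‖s‖ + k) - 10 / (‖s‖ + (k + 1 : ℕ)) := by
    have hk : (0 : ℝ) ≤ k := k.cast_nonneg
    rw [Nat.cast_add_one, ← add_assoc]
    refine norm_inv_sub_log_sub_log_le ?_ (by linarith)
      (sq_norm_add_natCast_le (by linarith) k)
    rw [add_re, natCast_re]
    linarith
  rw [htel, ← Finset.sum_sub_distrib]
  refine (norm_sum_le_of_le _ fun k _ ↦ hterm k).trans ?_
  rw [Finset.sum_range_sub' (fun k : ℕ ↦ 10 / (‖s‖ + k)), Nat.cast_zero, add_zero, sub_le_self_iff]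
  positivity

lemma tendsto_log_natCast_sub_log_add {s : ℂ} (hs : 0 < s.re) :
    Tendsto (fun n : ℕ ↦ log n - log (s + n)) atTop (𝓝 0) := by
  have hlog : Tendsto (fun n : ℕ ↦ -log (1 + s / n)) atTop (𝓝 0) := by
    have h := (tendsto_const_div_atTop_nhds_zero_nat s).const_add 1
    rw [add_zero] at h
    simpa using (h.clog one_mem_slitPlane).neg
  refine hlog.congr' ?_
  filter_upwards [eventually_ne_atTop 0] with n hn
  have hn' : (n : ℂ) ≠ 0 := Nat.cast_ne_zero.mpr hn
  have hfac : s + n = (n : ℝ) * (1 + s / n) := by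
    rw [ofReal_natCast]
    field_simp
    ring
  have hne : 1 + s / n ≠ 0 := by
    intro h
    rw [h, mul_zero] at hfac
    exact add_natCast_ne_zero_of_re_pos hs n hfac
  rw [hfac, log_ofReal_mul (by positivity) hne, natCast_log]
  ring

lemma norm_digamma_sub_log_le {s : ℂ} (hs : 1 / 4 ≤ s.re) :
    ‖digamma s - log s‖ ≤ 10 / ‖s‖ := by
  have hs0 : 0 < s.re := by linarith
  have hs1 : 0 < (s + 1).re := by
    rw [add_re, one_re]
    linarith
  have h := ((tendsto_log_sub_sum_digamma hs0).sub
    (tendsto_log_natCast_sub_log_add hs1)).sub_const (log s)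
  rw [sub_zero] at h
  refine le_of_tendsto h.norm (Eventually.of_forall fun n ↦ ?_)
  refine le_of_eq_of_le ?_ (norm_sum_inv_sub_log_sub_log_le hs (n + 1))
  rw [← norm_neg, Nat.cast_add_one, add_comm (n : ℂ) 1, ← add_assoc]
  congr 1
  ring

end Digamma

section MellinTransform

open MeasureTheory Set

lemma exists_norm_mellin_le {E : Type*} [NormedAddCommGroup E] [NormedSpace ℂ E] {f : ℝ → E}
    {a b : ℝ} (ha : MellinConvergent f a) (hb : MellinConvergent f b) :
    ∃ B, ∀ s : ℂ, s.re ∈ Icc a b → ‖mellin f s‖ ≤ B := by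
  refine ⟨∫ t in Ioi (0 : ℝ), (‖(t : ℂ) ^ ((a : ℂ) - 1) • f t‖ + ‖(t : ℂ) ^ ((b : ℂ) - 1) • f t‖),
    fun s hs ↦ norm_integral_le_of_norm_le (ha.norm.add hb.norm)
      ((ae_restrict_iff' measurableSet_Ioi).mpr (ae_of_all _ fun t ht ↦ ?_))⟩
  have ht : 0 < t := ht
  simp only [norm_smul, norm_cpow_eq_rpow_re_of_pos ht, sub_re, ofReal_re, one_re]
  rw [← add_mul]
  gcongr
  rcases le_total t 1 with h | h
  · exact (Real.rpow_le_rpow_of_exponent_ge ht h (by linarith [hs.1])).trans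
      (le_add_of_nonneg_right (by positivity))
  · exact (Real.rpow_le_rpow_of_exponent_le h (by linarith [hs.2])).trans
      (le_add_of_nonneg_left (by positivity))

lemma exists_norm_completedRiemannZeta₀_le (a b : ℝ) :
    ∃ B, ∀ s : ℂ, s.re ∈ Icc a b → ‖completedRiemannZeta₀ s‖ ≤ B := by
  set P := HurwitzZeta.hurwitzEvenFEPair 0
  have hconv (x : ℝ) : MellinConvergent P.f_modif x :=
    (P.isStrongFEPair_toStrongFEPair.hasMellin x).1
  obtain ⟨B, hB⟩ := exists_norm_mellin_le (hconv (a / 2)) (hconv (b / 2))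
  refine ⟨B / 2, fun s hs ↦ ?_⟩
  have heq : completedRiemannZeta₀ s = mellin P.f_modif (s / 2) / 2 := rfl
  rw [heq, norm_div, Complex.norm_ofNat]
  gcongr
  refine hB _ ?_
  rw [div_ofNat_re]
  constructor <;> linarith [hs.1, hs.2]

end MellinTransform

section RiemannXi

lemma differentiable_riemannXi : Differentiable ℂ riemannXi := by
  unfold riemannXi
  have := differentiable_completedZeta₀
  fun_prop

lemma riemannXi_one : riemannXi 1 = 1 := by
  simp [riemannXi]

lemma riemannXi_one_sub (s : ℂ) : riemannXi (1 - s) = riemannXi s := by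
  simp only [riemannXi, completedRiemannZeta₀_one_sub]
  ring

lemma riemannXi_eq_mul_completedRiemannZeta {s : ℂ} (h0 : s ≠ 0) (h1 : s ≠ 1) :
    riemannXi s = s * (s - 1) * completedRiemannZeta s := by
  have : 1 - s ≠ 0 := sub_ne_zero.mpr h1.symm
  rw [riemannXi, completedRiemannZeta_eq]
  field_simp
  ring

lemma riemannXi_eq_mul_riemannZeta {s : ℂ} (hs : 0 < s.re) (h1 : s ≠ 1) :
    riemannXi s = s * ((s - 1) * (Gammaℝ s * riemannZeta s)) := by
  have h0 : s ≠ 0 := ne_zero_of_re_pos hs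
  have hΓ : Gammaℝ s ≠ 0 := Gammaℝ_ne_zero_of_re_pos hs
  rw [riemannXi_eq_mul_completedRiemannZeta h0 h1, riemannZeta_def_of_ne_zero h0,
    mul_div_cancel₀ _ hΓ, mul_assoc]

open ComplexConjugate in
lemma riemannXi_conj (s : ℂ) : riemannXi (conj s) = conj (riemannXi s) := by
  have hpos {s : ℂ} (hs : 0 < s.re) : riemannXi (conj s) = conj (riemannXi s) := by
    rcases eq_or_ne s 1 with rfl | h1
    · simp [riemannXi_one]
    have hπ : (Real.pi : ℂ) ^ (-conj s / 2) = conj ((Real.pi : ℂ) ^ (-s / 2)) := by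
      have harg : (Real.pi : ℂ).arg ≠ Real.pi := by
        rw [arg_ofReal_of_nonneg Real.pi_pos.le]
        exact Real.pi_ne_zero.symm
      have h := cpow_conj (Real.pi : ℂ) (-s / 2) harg
      rwa [conj_ofReal, map_div₀, map_neg, map_ofNat] at h
    have hΓ : Gamma (conj s / 2) = conj (Gamma (s / 2)) := by
      rw [← Gamma_conj, map_div₀, map_ofNat]
    rw [riemannXi_eq_mul_riemannZeta hs h1, riemannXi_eq_mul_riemannZeta (by rwa [conj_re])
      (by rwa [Ne, map_eq_one_iff _ (starRingEnd ℂ).injective]), Gammaℝ, Gammaℝ, hπ, hΓ,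
      riemannZeta_conj]
    simp only [map_mul, map_sub, map_one]
  rcases lt_or_ge 0 s.re with hs | hs
  · exact hpos hs
  · have h := hpos (s := 1 - s) (by rw [sub_re, one_re]; linarith)
    rwa [map_sub, map_one, riemannXi_one_sub, riemannXi_one_sub] at h

lemma riemannXi_ne_zero {s : ℂ} (hs : 0 < s.re) (hζ : riemannZeta s ≠ 0) : riemannXi s ≠ 0 := by
  rcases eq_or_ne s 1 with rfl | h1
  · rw [riemannXi_one]
    exact one_ne_zero
  rw [riemannXi_eq_mul_riemannZeta hs h1]
  exact mul_ne_zero (ne_zero_of_re_pos hs) (mul_ne_zero (sub_ne_zero.mpr h1)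
    (mul_ne_zero (Gammaℝ_ne_zero_of_re_pos hs) hζ))

lemma riemannXi_ne_zero_of_one_le_re {s : ℂ} (hs : 1 ≤ s.re) : riemannXi s ≠ 0 :=
  riemannXi_ne_zero (by linarith) (riemannZeta_ne_zero_of_one_le_re hs)

lemma exists_norm_riemannXi_le (a b : ℝ) :
    ∃ C : ℝ, 0 < C ∧ ∀ s : ℂ, s.re ∈ Set.Icc a b → ‖riemannXi s‖ ≤ C * (1 + ‖s‖) ^ 2 := by
  obtain ⟨B, hB⟩ := exists_norm_completedRiemannZeta₀_le a b
  refine ⟨|B| + 1, by positivity, fun s hs ↦ ?_⟩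
  have hnorm : 0 ≤ ‖s‖ := norm_nonneg s
  calc ‖riemannXi s‖ ≤ ‖s‖ * ‖s - 1‖ * ‖completedRiemannZeta₀ s‖ + 1 := by
        rw [riemannXi, ← norm_mul, ← norm_mul]
        simpa using norm_add_le (s * (s - 1) * completedRiemannZeta₀ s) 1
    _ ≤ ‖s‖ * (‖s‖ + 1) * |B| + 1 := by
        gcongr
        · simpa using norm_sub_le s 1
        · exact (hB s hs).trans (le_abs_self B)
    _ ≤ (|B| + 1) * (1 + ‖s‖) ^ 2 := by
        nlinarith [mul_nonneg hnorm (abs_nonneg B), abs_nonneg B, sq_nonneg ‖s‖]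

end RiemannXi

section LogDeriv

lemma norm_LSeries_le_of_apply_one_eq_zero {f : ℕ → ℂ} (hf : f 1 = 0) {σ : ℝ}
    (hsum : LSeriesSummable f σ) {s : ℂ} (hs : σ ≤ s.re) :
    ‖LSeries f s‖ ≤ 2 ^ (σ - s.re) * ∑' n, ‖LSeries.term f σ n‖ := by
  have hterm (n : ℕ) :
      ‖LSeries.term f s n‖ ≤ 2 ^ (σ - s.re) * ‖LSeries.term f σ n‖ := by
    rcases eq_or_ne n 0 with rfl | hn
    · simp
    rcases eq_or_ne n 1 with rfl | hn1
    · simp [hf]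
    have hn0 : (0 : ℝ) < n := by positivity
    have h2 : (2 : ℝ) ≤ n := Nat.ofNat_le_cast.mpr (by lia)
    have hpow : (n : ℝ) ^ (σ - s.re) ≤ 2 ^ (σ - s.re) :=
      Real.rpow_le_rpow_of_nonpos (by norm_num) h2 (by linarith)
    rw [LSeries.norm_term_eq, LSeries.norm_term_eq, if_neg hn, if_neg hn, ofReal_re]
    calc ‖f n‖ / n ^ s.re = n ^ (σ - s.re) * (‖f n‖ / n ^ σ) := by
          rw [Real.rpow_sub hn0]
          field_simp
      _ ≤ 2 ^ (σ - s.re) * (‖f n‖ / n ^ σ) := by gcongr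
  rw [← tsum_mul_left]
  exact tsum_of_norm_bounded (hsum.norm.mul_left _).hasSum hterm

lemma two_rpow_le_four_div {x : ℝ} (hx : 1 ≤ x) : (2 : ℝ) ^ (3 / 2 - x) ≤ 4 / x := by
  have hx2 : x ≤ (2 : ℝ) ^ x := by
    have h := one_add_mul_self_le_rpow_one_add (s := 1) (by norm_num) hx
    norm_num at h
    linarith
  have h4 : (2 : ℝ) ^ (3 / 2 : ℝ) ≤ 4 :=
    (Real.rpow_le_rpow_of_exponent_le (by norm_num) (by norm_num)).trans_eq
      (by norm_num : (2 : ℝ) ^ (2 : ℝ) = 4)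
  rw [Real.rpow_sub two_pos]
  gcongr

lemma exists_norm_logDeriv_riemannZeta_le :
    ∃ C : ℝ, 0 < C ∧ ∀ s : ℂ, 3 / 2 ≤ s.re → ‖logDeriv riemannZeta s‖ ≤ C / s.re := by
  set Λ : ℕ → ℂ := fun n ↦ (ArithmeticFunction.vonMangoldt n : ℂ)
  have hsum : LSeriesSummable Λ (3 / 2 : ℝ) :=
    ArithmeticFunction.LSeriesSummable_vonMangoldt (by rw [ofReal_re]; norm_num)
  set S := ∑' n, ‖LSeries.term Λ (3 / 2 : ℝ) n‖
  have hS : 0 ≤ S := tsum_nonneg fun _ ↦ norm_nonneg _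
  refine ⟨4 * S + 1, by positivity, fun s hs ↦ ?_⟩
  have hΛ : LSeries Λ s = -logDeriv riemannZeta s := by
    rw [logDeriv_apply, ← neg_div]
    exact ArithmeticFunction.LSeries_vonMangoldt_eq_deriv_riemannZeta_div (by linarith)
  rw [← norm_neg, ← hΛ]
  calc ‖LSeries Λ s‖ ≤ 2 ^ (3 / 2 - s.re) * S :=
        norm_LSeries_le_of_apply_one_eq_zero (by simp [Λ]) hsum hs
    _ ≤ 4 / s.re * S := by
        gcongr
        exact two_rpow_le_four_div (by linarith)
    _ ≤ (4 * S + 1) / s.re := by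
        rw [div_mul_eq_mul_div]
        gcongr
        linarith

lemma hasDerivAt_Gammaℝ {s : ℂ} (hs : 0 < s.re) :
    HasDerivAt Gammaℝ (Gammaℝ s * ((digamma (s / 2) - Real.log Real.pi) / 2)) s := by
  have hs2 : 0 < (s / 2).re := by
    rw [div_ofNat_re]
    positivity
  have hΓ0 : Gamma (s / 2) ≠ 0 := Gamma_ne_zero_of_re_pos hs2
  have hΓ : HasDerivAt (fun s ↦ Gamma (s / 2)) (deriv Gamma (s / 2) * (1 / 2)) s :=
    (differentiableAt_Gamma_of_re_pos hs2).hasDerivAt.comp s ((hasDerivAt_id s).div_const 2)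
  have hπ := ((hasDerivAt_id s).neg.div_const 2).const_cpow (c := (Real.pi : ℂ))
    (Or.inl (ofReal_ne_zero.mpr Real.pi_ne_zero))
  convert! hπ.mul hΓ using 1
  rw [digamma_def, logDeriv_apply, ofReal_log Real.pi_pos.le, Gammaℝ]
  simp only [Pi.neg_apply, id]
  field_simp
  ring

lemma logDeriv_riemannXi {s : ℂ} (hs : 1 < s.re) :
    logDeriv riemannXi s = 1 / s + 1 / (s - 1) +
      ((digamma (s / 2) - Real.log Real.pi) / 2 + logDeriv riemannZeta s) := by
  have hs0 : 0 < s.re := by linarith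
  have hne {z : ℂ} (hz : 1 < z.re) : z ≠ 1 := by
    rintro rfl
    exact lt_irrefl _ hz
  have h0 : s ≠ 0 := ne_zero_of_re_pos hs0
  have h1 : s - 1 ≠ 0 := sub_ne_zero.mpr (hne hs)
  have hζ : riemannZeta s ≠ 0 := riemannZeta_ne_zero_of_one_le_re hs.le
  have hΓ : Gammaℝ s ≠ 0 := Gammaℝ_ne_zero_of_re_pos hs0
  have hdζ : DifferentiableAt ℂ riemannZeta s := differentiableAt_riemannZeta (hne hs)
  have hdΓ := hasDerivAt_Gammaℝ hs0
  have hdΓ' : DifferentiableAt ℂ Gammaℝ s := hdΓ.differentiableAt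
  have hlocal : riemannXi =ᶠ[nhds s] fun z ↦ z * ((z - 1) * (Gammaℝ z * riemannZeta z)) := by
    filter_upwards [(isOpen_lt continuous_const continuous_re).mem_nhds hs] with z (hz : 1 < z.re)
    exact riemannXi_eq_mul_riemannZeta (by linarith) (hne hz)
  have hlogΓ : logDeriv Gammaℝ s = (digamma (s / 2) - Real.log Real.pi) / 2 := by
    rw [logDeriv_apply, hdΓ.deriv, mul_div_cancel_left₀ _ hΓ]
  rw [logDeriv_apply, hlocal.deriv_eq, hlocal.eq_of_nhds, ← logDeriv_apply,
    logDeriv_mul (f := fun z ↦ z) (g := fun z ↦ (z - 1) * (Gammaℝ z * riemannZeta z)) s h0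
      (mul_ne_zero h1 (mul_ne_zero hΓ hζ)) (by fun_prop) (by fun_prop),
    logDeriv_mul (f := fun z ↦ z - 1) (g := fun z ↦ Gammaℝ z * riemannZeta z) s h1
      (mul_ne_zero hΓ hζ) (by fun_prop) (by fun_prop), logDeriv_mul s hΓ hζ hdΓ' hdζ, hlogΓ]
  simp only [logDeriv_apply, deriv_id'', deriv_sub_const_fun]
  ring

/-- The error in Stirling's approximation `ξ'/ξ(s) ≈ (log s - log 2π) / 2`. -/
noncomputable def stirlingError (s : ℂ) : ℂ :=
  logDeriv riemannXi s - (log s - Real.log (2 * Real.pi)) / 2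

lemma log_div_two {s : ℂ} (hs : s ≠ 0) : log (s / 2) = log s - Real.log 2 := by
  rw [div_eq_inv_mul, ← ofReal_ofNat, ← ofReal_inv, log_ofReal_mul (by positivity) hs,
    Real.log_inv, ofReal_neg]
  ring

lemma stirlingError_eq {s : ℂ} (hs : 1 < s.re) :
    stirlingError s = 1 / s + 1 / (s - 1) +
      ((digamma (s / 2) - log (s / 2)) / 2 + logDeriv riemannZeta s) := by
  rw [stirlingError, logDeriv_riemannXi hs, log_div_two (ne_zero_of_re_pos (by linarith)),
    Real.log_mul two_ne_zero Real.pi_ne_zero, ofReal_add]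
  ring

lemma exists_norm_stirlingError_le :
    ∃ C : ℝ, 0 < C ∧ ∀ s : ℂ, 3 / 2 ≤ s.re → ‖stirlingError s‖ ≤ C / s.re := by
  obtain ⟨C, hC, hζ⟩ := exists_norm_logDeriv_riemannZeta_le
  refine ⟨C + 14, by positivity, fun s hs ↦ ?_⟩
  have hs0 : 0 < s.re := by linarith
  have hinv : ‖1 / s‖ ≤ 1 / s.re := by
    rw [norm_div, norm_one]
    gcongr
    exact re_le_norm s
  have hinv' : ‖1 / (s - 1)‖ ≤ 3 / s.re := by
    have h := re_le_norm (s - 1)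
    rw [sub_re, one_re] at h
    rw [norm_div, norm_one, div_le_div_iff₀ (by linarith) hs0]
    linarith
  have hψ : ‖(digamma (s / 2) - log (s / 2)) / 2‖ ≤ 10 / s.re := by
    have h := norm_digamma_sub_log_le (s := s / 2) (by rw [div_ofNat_re]; linarith)
    rw [norm_div, Complex.norm_ofNat] at h ⊢
    calc ‖digamma (s / 2) - log (s / 2)‖ / 2 ≤ 10 / (‖s‖ / 2) / 2 := by gcongr
      _ = 10 / ‖s‖ := by ring
      _ ≤ 10 / s.re := by
        gcongr
        exact re_le_norm s
  rw [stirlingError_eq (by linarith)]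
  calc _ ≤ 1 / s.re + 3 / s.re + (10 / s.re + C / s.re) :=
        norm_add_le_of_le (norm_add_le_of_le hinv hinv') (norm_add_le_of_le hψ (hζ s hs))
    _ = (C + 14) / s.re := by ring

end LogDeriv

section ComplexAnalysis

open Filter Topology Metric

lemma norm_le_of_re_mem_Icc_of_norm_le_exp_exp {E : Type*} [NormedAddCommGroup E] [NormedSpace ℂ E]
    {f : ℂ → E} {a b c B C : ℝ} (hab : a < b) (hf : DifferentiableOn ℂ f (re ⁻¹' Set.Icc a b))
    (hc : c < Real.pi / (b - a))
    (hB : ∀ z : ℂ, z.re ∈ Set.Icc a b → ‖f z‖ ≤ Real.exp (B * Real.exp (c * |z.im|)))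
    (hleft : ∀ z : ℂ, z.re = a → ‖f z‖ ≤ C) (hright : ∀ z : ℂ, z.re = b → ‖f z‖ ≤ C) {z : ℂ}
    (hz : z.re ∈ Set.Icc a b) : ‖f z‖ ≤ C := by
  have hcont : DiffContOnCl ℂ f (re ⁻¹' Set.Ioo a b) := by
    refine DifferentiableOn.diffContOnCl ?_
    rwa [closure_preimage_re, closure_Ioo hab.ne]
  have hgrowth : f =O[comap (_root_.abs ∘ im) atTop ⊓ 𝓟 (re ⁻¹' Set.Ioo a b)]
      fun z ↦ Real.exp (B * Real.exp (c * |z.im|)) := by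
    refine Asymptotics.IsBigO.of_bound 1 (eventually_inf_principal.mpr (Eventually.of_forall
      fun z hz ↦ ?_))
    rw [one_mul, Real.norm_of_nonneg (Real.exp_pos _).le]
    exact hB z (Set.Ioo_subset_Icc_self hz)
  exact PhragmenLindelof.vertical_strip hcont ⟨c, hc, B, hgrowth⟩ hleft hright hz.1 hz.2

lemma exists_eq_mul_exp_of_ne_zero {f : ℂ → ℂ} {c : ℂ} {R : ℝ}
    (hf : DifferentiableOn ℂ f (ball c R)) (h0 : ∀ z ∈ ball c R, f z ≠ 0) :
    ∃ g : ℂ → ℂ, DifferentiableOn ℂ g (ball c R) ∧ g c = 0 ∧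
      ∀ z ∈ ball c R, f z = f c * exp (g z) := by
  have hlog : DifferentiableOn ℂ (fun z ↦ deriv f z / f z) (ball c R) :=
    (hf.deriv isOpen_ball).div hf h0
  obtain ⟨g, hg0, hg⟩ := hlog.isExactOn_ball.with_val_at c 0
  refine ⟨g, fun z hz ↦ (hg z hz).differentiableAt.differentiableWithinAt, hg0, fun z hz ↦ ?_⟩
  have hderiv {w : ℂ} (hw : w ∈ ball c R) : HasDerivAt (fun w ↦ f w * exp (-g w)) 0 w := by
    refine ((hf.differentiableAt (isOpen_ball.mem_nhds hw)).hasDerivAt.mul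
      (hg w hw).neg.cexp).congr_deriv ?_
    field_simp [h0 w hw]
    ring
  have hconst := isOpen_ball.is_const_of_deriv_eq_zero (convex_ball c R).isPreconnected
    (fun w hw ↦ (hderiv hw).differentiableAt.differentiableWithinAt)
    (fun w hw ↦ (hderiv hw).deriv) hz (mem_ball_self (pos_of_mem_ball hz))
  simp only [hg0, neg_zero, exp_zero, mul_one] at hconst
  rw [← hconst, mul_assoc, ← exp_add, neg_add_cancel, exp_zero, mul_one]

lemma mul_exp_neg_le_norm_of_norm_le_mul_exp {f : ℂ → ℂ} {c z : ℂ} {R M : ℝ} (hM : 0 < M)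
    (hf : DifferentiableOn ℂ f (ball c R)) (h0 : ∀ z ∈ ball c R, f z ≠ 0)
    (hle : ∀ z ∈ ball c R, ‖f z‖ ≤ ‖f c‖ * Real.exp M) (hz : z ∈ ball c R) :
    ‖f c‖ * Real.exp (-(2 * M * ‖z - c‖ / (R - ‖z - c‖))) ≤ ‖f z‖ := by
  obtain ⟨g, hg, hgc, hfg⟩ := exists_eq_mul_exp_of_ne_zero hf h0
  have hR : 0 < R := pos_of_mem_ball hz
  have hc : 0 < ‖f c‖ := norm_pos_iff.mpr (h0 c (mem_ball_self hR))
  have hmaps : Set.MapsTo (fun w ↦ w + c) (ball 0 R) (ball c R) := fun w hw ↦ by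
    simpa [mem_ball_iff_norm] using hw
  have hgre : Set.MapsTo (fun w ↦ g (w + c)) (ball 0 R) {w | w.re ≤ M} := fun w hw ↦ by
    have h := hle _ (hmaps hw)
    rw [hfg _ (hmaps hw), norm_mul, norm_exp] at h
    exact Real.exp_le_exp.mp (le_of_mul_le_mul_left h hc)
  have hbound := borelCaratheodory_zero hM (hg.comp (by fun_prop) hmaps) hgre hR
    (z := z - c) (mem_ball_zero_iff.mpr (mem_ball_iff_norm.mp hz)) (by simpa using hgc)
  simp only [Function.comp_apply, sub_add_cancel] at hbound
  rw [hfg z hz, norm_mul, norm_exp]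
  gcongr
  linarith [(abs_le.mp (abs_re_le_norm (g z))).1]

lemma norm_mul_sub_le_of_neg_le_re {f : ℂ → ℂ} {c z : ℂ} {R M : ℝ} (hM : 0 < M)
    (hf : DifferentiableOn ℂ f (ball c R)) (hre : ∀ z ∈ ball c R, -M ≤ (f z).re)
    (hz : z ∈ ball c R) : ‖f z‖ * (R - ‖z - c‖) ≤ 2 * R * (M + ‖f c‖) := by
  have hmaps : Set.MapsTo (fun w ↦ w + c) (ball 0 R) (ball c R) := fun w hw ↦ by
    simpa [mem_ball_iff_norm] using hw
  have hzR : ‖z - c‖ < R := mem_ball_iff_norm.mp hz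
  have hbound := borelCaratheodory (f := fun w ↦ -f (w + c)) hM
    (hf.comp (by fun_prop) hmaps).neg
    (fun w hw ↦ neg_le.mp (hre _ (hmaps hw))) (pos_of_mem_ball hz)
    (z := z - c) (mem_ball_zero_iff.mpr (mem_ball_iff_norm.mp hz))
  rw [sub_add_cancel, zero_add, norm_neg, norm_neg, ← add_div, le_div_iff₀ (by linarith)] at hbound
  nlinarith [norm_nonneg (f c)]

lemma hasDerivAt_log_norm_comp {f : ℂ → ℂ} {γ : ℝ → ℂ} {γ' : ℂ} {u : ℝ}
    (hf : DifferentiableAt ℂ f (γ u)) (hγ : HasDerivAt γ γ' u) (h0 : f (γ u) ≠ 0) :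
    HasDerivAt (fun u ↦ Real.log ‖f (γ u)‖) (logDeriv f (γ u) * γ').re u := by
  have hsq := ((hf.hasDerivAt.comp u hγ).norm_sq.log (by simpa using h0)).div_const 2
  have hlog : (fun u ↦ Real.log ‖f (γ u)‖) = fun u ↦ Real.log (‖(f ∘ γ) u‖ ^ 2) / 2 := by
    ext u
    rw [Real.log_pow, Function.comp_apply]
    push_cast
    ring
  rw [hlog]
  refine hsq.congr_deriv ?_
  have hnorm : normSq (f (γ u)) ≠ 0 := by simpa using h0
  rw [Function.comp_apply, Complex.inner, logDeriv_apply, Complex.sq_norm, div_mul_eq_mul_div,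
    div_eq_mul_inv (_ * _) (f (γ u)), inv_def, ← mul_assoc, re_mul_ofReal]
  field_simp

lemma hasDerivAt_log_norm_add_ofReal {f : ℂ → ℂ} {s : ℂ} {u : ℝ}
    (hf : DifferentiableAt ℂ f (s + u)) (h0 : f (s + u) ≠ 0) :
    HasDerivAt (fun u : ℝ ↦ Real.log ‖f (s + u)‖) (logDeriv f (s + u)).re u := by
  simpa using hasDerivAt_log_norm_comp (γ := fun u : ℝ ↦ s + u) hf
    ((hasDerivAt_id u).ofReal_comp.const_add s) h0

lemma norm_le_exp_mul_norm_of_neg_le_re_logDeriv {f : ℂ → ℂ} {s : ℂ} {a K : ℝ} (ha : 0 ≤ a)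
    (hf : ∀ u ∈ Set.Icc 0 a, DifferentiableAt ℂ f (s + u))
    (h0 : ∀ u ∈ Set.Icc 0 a, f (s + u) ≠ 0)
    (hK : ∀ u ∈ Set.Icc 0 a, -K ≤ (logDeriv f (s + u)).re) :
    ‖f s‖ ≤ Real.exp (K * a) * ‖f (s + a)‖ := by
  have hderiv {u : ℝ} (hu : u ∈ Set.Icc 0 a) :
      HasDerivAt (fun u : ℝ ↦ Real.log ‖f (s + u)‖ + K * u)
        ((logDeriv f (s + u)).re + K * 1) u :=
    (hasDerivAt_log_norm_add_ofReal (hf u hu) (h0 u hu)).add ((hasDerivAt_id u).const_mul K)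
  have hmono : MonotoneOn (fun u : ℝ ↦ Real.log ‖f (s + u)‖ + K * u) (Set.Icc 0 a) := by
    refine monotoneOn_of_deriv_nonneg (convex_Icc 0 a)
      (fun u hu ↦ (hderiv hu).continuousAt.continuousWithinAt)
      (fun u hu ↦ (hderiv (interior_subset hu)).differentiableAt.differentiableWithinAt)
      fun u hu ↦ ?_
    rw [(hderiv (interior_subset hu)).deriv]
    linarith [hK u (interior_subset hu)]
  have hle := hmono (Set.left_mem_Icc.mpr ha) (Set.right_mem_Icc.mpr ha) ha
  have hs : 0 < ‖f s‖ := by simpa using h0 0 (Set.left_mem_Icc.mpr ha)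
  have hsa : 0 < ‖f (s + a)‖ := norm_pos_iff.mpr (h0 a (Set.right_mem_Icc.mpr ha))
  simp only [ofReal_zero, add_zero, mul_zero] at hle
  rwa [← Real.log_le_log_iff hs (by positivity), Real.log_mul (Real.exp_ne_zero _) hsa.ne',
    Real.log_exp, add_comm]

lemma abs_log_norm_sub_log_norm_le {f : ℂ → ℂ} {c : ℂ} {B t : ℝ}
    (hf : ∀ u : ℝ, |u| ≤ |t| → DifferentiableAt ℂ f (c + u * I))
    (h0 : ∀ u : ℝ, |u| ≤ |t| → f (c + u * I) ≠ 0)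
    (hB : ∀ u : ℝ, |u| ≤ |t| → ‖logDeriv f (c + u * I)‖ ≤ B) :
    |Real.log ‖f (c + t * I)‖ - Real.log ‖f c‖| ≤ B * |t| := by
  have hderiv (u : ℝ) (hu : u ∈ Set.Icc (-|t|) |t|) :
      HasDerivWithinAt (fun u : ℝ ↦ Real.log ‖f (c + u * I)‖)
        (logDeriv f (c + u * I) * I).re (Set.Icc (-|t|) |t|) u :=
    (hasDerivAt_log_norm_comp (γ := fun u : ℝ ↦ c + u * I) (hf u (abs_le.mpr hu))
      (by simpa using ((hasDerivAt_id u).ofReal_comp.mul_const I).const_add c)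
      (h0 u (abs_le.mpr hu))).hasDerivWithinAt
  have hbound (u : ℝ) (hu : u ∈ Set.Icc (-|t|) |t|) : ‖(logDeriv f (c + u * I) * I).re‖ ≤ B := by
    refine (abs_re_le_norm _).trans ?_
    rw [norm_mul, norm_I, mul_one]
    exact hB u (abs_le.mpr hu)
  simpa using (convex_Icc (-|t|) |t|).norm_image_sub_le_of_norm_hasDerivWithin_le hderiv hbound
    (x := 0) (y := t) ⟨by simp, by simp⟩ ⟨neg_abs_le t, le_abs_self t⟩

lemma neg_le_re_logDeriv_of_norm_sub_le {f : ℂ → ℂ} {s : ℂ} {K : ℝ}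
    (hf : DifferentiableAt ℂ f s) (h0 : f s ≠ 0)
    (hle : ∀ᶠ a : ℝ in 𝓝[>] 0, ‖f (s - a)‖ ≤ Real.exp (2 * K * a) * ‖f (s + a)‖) :
    -K ≤ (logDeriv f s).re := by
  have hplus : HasDerivAt (fun u : ℝ ↦ s + u) 1 0 := by
    simpa using (hasDerivAt_id (0 : ℝ)).ofReal_comp.const_add s
  have hminus : HasDerivAt (fun u : ℝ ↦ s - u) (-1) 0 := by
    simpa using (hasDerivAt_id (0 : ℝ)).ofReal_comp.const_sub s
  have hderiv : HasDerivAt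
      (fun u : ℝ ↦ Real.log ‖f (s + u)‖ - Real.log ‖f (s - u)‖ + 2 * K * u)
      (2 * ((logDeriv f s).re + K)) 0 := by
    refine (((hasDerivAt_log_norm_comp (by simpa using hf) hplus (by simpa using h0)).sub
      (hasDerivAt_log_norm_comp (by simpa using hf) hminus (by simpa using h0))).add
      ((hasDerivAt_id (0 : ℝ)).const_mul (2 * K))).congr_deriv ?_
    simp only [ofReal_zero, add_zero, sub_zero, mul_one, mul_neg, neg_re]
    ring
  have hne {γ : ℝ → ℂ} {γ' : ℂ} (hγ : HasDerivAt γ γ' 0) (hγ0 : γ 0 = s) :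
      ∀ᶠ u in 𝓝[>] (0 : ℝ), f (γ u) ≠ 0 := by
    rw [← hγ0] at hf h0
    exact nhdsWithin_le_nhds ((hf.continuousAt.comp hγ.continuousAt).eventually_ne h0)
  have hnonneg : 0 ≤ 2 * ((logDeriv f s).re + K) := by
    refine ge_of_tendsto hderiv.tendsto_slope_zero_right ?_
    filter_upwards [hle, hne hplus (by simp), hne hminus (by simp), self_mem_nhdsWithin]
      with u hu hp hm (hu0 : 0 < u)
    have hp' : 0 < ‖f (s + u)‖ := norm_pos_iff.mpr hp
    rw [← Real.log_le_log_iff (norm_pos_iff.mpr hm) (by positivity),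
      Real.log_mul (Real.exp_ne_zero _) hp'.ne', Real.log_exp] at hu
    simp only [zero_add, ofReal_zero, add_zero, sub_zero, sub_self, mul_zero, smul_eq_mul]
    exact mul_nonneg (inv_nonneg.mpr hu0.le) (by linarith)
  linarith

end ComplexAnalysis

section CriticalLine

open Metric ComplexConjugate

lemma half_le_log_two_add {x : ℝ} (hx : 0 ≤ x) : 1 / 2 ≤ Real.log (2 + x) := by
  have h := Real.log_le_log two_pos (by linarith : 2 ≤ 2 + x)
  linarith [Real.log_two_gt_d9]

lemma log_two_add_add_one_le {x : ℝ} (hx : 0 ≤ x) :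
    Real.log (2 + (x + 1)) ≤ 2 * Real.log (2 + x) := by
  rw [← Real.log_rpow (by positivity), Real.rpow_two]
  exact Real.log_le_log (by positivity) (by nlinarith)

lemma norm_log_le_mul_log_two_add_norm {s : ℂ} (hs : 1 / 2 ≤ ‖s‖) :
    ‖log s‖ ≤ 9 * Real.log (2 + ‖s‖) := by
  have hL := half_le_log_two_add (norm_nonneg s)
  have hre : |(log s).re| ≤ Real.log (2 + ‖s‖) := by
    rw [log_re, abs_le]
    constructor
    · rw [← Real.log_inv]
      exact Real.log_le_log (by positivity) ((inv_le_of_inv_le₀ (by positivity) (by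
        calc ‖s‖⁻¹ ≤ (1 / 2)⁻¹ := by gcongr
          _ ≤ 2 + ‖s‖ := by norm_num)))
    · exact Real.log_le_log (by linarith) (by linarith)
  have him : |(log s).im| ≤ 4 := by
    rw [log_im]
    exact (abs_arg_le_pi s).trans Real.pi_lt_four.le
  linarith [norm_le_abs_re_add_abs_im (log s)]

lemma riemannXi_ne_zero_of_half_lt_re
    (RH : ∀ s : ℂ, 0 < s.re → s.re < 1 → riemannZeta s = 0 → s.re = 1 / 2) {s : ℂ}
    (hs : 1 / 2 < s.re) : riemannXi s ≠ 0 := by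
  have hs0 : 0 < s.re := by linarith
  rcases lt_or_ge s.re 1 with h | h
  · exact riemannXi_ne_zero hs0 fun hζ ↦ hs.ne' (RH s hs0 h hζ)
  · exact riemannXi_ne_zero_of_one_le_re h

lemma logDeriv_riemannXi_eq_stirlingError_add (s : ℂ) :
    logDeriv riemannXi s = stirlingError s + (log s - Real.log (2 * Real.pi)) / 2 := by
  rw [stirlingError, sub_add_cancel]

lemma exists_neg_le_re_logDeriv_riemannXi_of_three_halves_le_re :
    ∃ C : ℝ, 0 < C ∧ ∀ s : ℂ, 3 / 2 ≤ s.re → -C ≤ (logDeriv riemannXi s).re := by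
  obtain ⟨C, hC, hE⟩ := exists_norm_stirlingError_le
  refine ⟨C + |Real.log (2 * Real.pi)|, by positivity, fun s hs ↦ ?_⟩
  have hlog : 0 ≤ Real.log ‖s‖ := Real.log_nonneg (by linarith [re_le_norm s])
  have hre := (abs_le.mp ((abs_re_le_norm _).trans (hE s hs))).1
  have hCs : C / s.re ≤ C := div_le_self hC.le (by linarith)
  have hpi := le_abs_self (Real.log (2 * Real.pi))
  have hpi0 := abs_nonneg (Real.log (2 * Real.pi))
  rw [logDeriv_riemannXi_eq_stirlingError_add, add_re, div_ofNat_re, sub_re, ofReal_re, log_re]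
  linarith

lemma exists_norm_logDeriv_riemannXi_le :
    ∃ C : ℝ, 0 < C ∧ ∀ s : ℂ, 3 / 2 ≤ s.re →
      ‖logDeriv riemannXi s‖ ≤ C * Real.log (2 + ‖s‖) := by
  obtain ⟨C, hC, hE⟩ := exists_norm_stirlingError_le
  set D := |Real.log (2 * Real.pi)|
  refine ⟨2 * C + 9 + D, by positivity, fun s hs ↦ ?_⟩
  have hL := half_le_log_two_add (norm_nonneg s)
  have hlog := norm_log_le_mul_log_two_add_norm (s := s) (by linarith [re_le_norm s])
  have hCs : C / s.re ≤ C := div_le_self hC.le (by linarith)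
  have hmain : ‖(log s - Real.log (2 * Real.pi)) / 2‖ ≤ (9 * Real.log (2 + ‖s‖) + D) / 2 := by
    rw [norm_div, Complex.norm_ofNat]
    gcongr
    exact norm_sub_le_of_le hlog (norm_real _).le
  have hCL : C ≤ 2 * C * Real.log (2 + ‖s‖) := by nlinarith
  have hDL : D / 2 ≤ D * Real.log (2 + ‖s‖) := by nlinarith [abs_nonneg (Real.log (2 * Real.pi))]
  rw [logDeriv_riemannXi_eq_stirlingError_add]
  linarith [norm_add_le_of_le (hE s hs) hmain]

lemma exists_norm_riemannXi_le_exp (a b : ℝ) :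
    ∃ C : ℝ, 0 < C ∧ ∀ s : ℂ, s.re ∈ Set.Icc a b →
      ‖riemannXi s‖ ≤ Real.exp (C * (1 + |s.im|) ^ 2) := by
  obtain ⟨C, hC, hξ⟩ := exists_norm_riemannXi_le a b
  set A := max |a| |b|
  refine ⟨C * (1 + A) ^ 2, by positivity, fun s hs ↦ (hξ s hs).trans ?_⟩
  have hA : |s.re| ≤ A := abs_le_max_abs_abs hs.1 hs.2
  have hs1 : 1 + ‖s‖ ≤ (1 + A) * (1 + |s.im|) := by
    nlinarith [norm_le_abs_re_add_abs_im s, abs_nonneg s.im, abs_nonneg s.re]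
  calc C * (1 + ‖s‖) ^ 2 ≤ C * ((1 + A) * (1 + |s.im|)) ^ 2 := by gcongr
    _ = C * (1 + A) ^ 2 * (1 + |s.im|) ^ 2 := by ring
    _ ≤ Real.exp (C * (1 + A) ^ 2 * (1 + |s.im|) ^ 2) :=
        (lt_add_one _).le.trans (Real.add_one_le_exp _)

lemma exists_exp_neg_le_norm_riemannXi_five_halves_add_mul_I :
    ∃ C : ℝ, 0 < C ∧ ∀ t : ℝ,
      Real.exp (-(C * (1 + |t|) ^ 2)) ≤ ‖riemannXi (5 / 2 + t * I)‖ := by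
  obtain ⟨K, hK, hF⟩ := exists_norm_logDeriv_riemannXi_le
  set L := Real.log ‖riemannXi (5 / 2)‖
  refine ⟨4 * K + |L|, by positivity, fun t ↦ ?_⟩
  have hre (u : ℝ) : ((5 / 2 : ℂ) + u * I).re = 5 / 2 := by simp
  have hne (u : ℝ) : riemannXi (5 / 2 + u * I) ≠ 0 :=
    riemannXi_ne_zero_of_one_le_re (by rw [hre]; norm_num)
  have hbound (u : ℝ) (hu : |u| ≤ |t|) :
      ‖logDeriv riemannXi (5 / 2 + u * I)‖ ≤ 4 * K * (1 + |t|) := by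
    have hnorm : ‖(5 / 2 : ℂ) + u * I‖ ≤ 5 / 2 + |u| := (norm_add_le _ _).trans_eq (by simp)
    have hlog := Real.log_le_sub_one_of_pos (x := 2 + ‖(5 / 2 : ℂ) + u * I‖) (by positivity)
    calc ‖logDeriv riemannXi (5 / 2 + u * I)‖
        ≤ K * Real.log (2 + ‖(5 / 2 : ℂ) + u * I‖) := hF _ (by rw [hre]; norm_num)
      _ ≤ K * (4 * (1 + |t|)) := by
          gcongr
          linarith [abs_nonneg t]
      _ = 4 * K * (1 + |t|) := by ring
  have hlog := neg_le_of_abs_le (abs_log_norm_sub_log_norm_le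
    (fun u _ ↦ differentiable_riemannXi _) (fun u _ ↦ hne u) hbound)
  have ht := abs_nonneg t
  have h₁ : |L| ≤ |L| * (1 + |t|) ^ 2 := le_mul_of_one_le_right (abs_nonneg L) (by nlinarith)
  have h₂ : 4 * K * (1 + |t|) * |t| ≤ 4 * K * (1 + |t|) ^ 2 := by
    rw [sq, ← mul_assoc]
    gcongr
    linarith
  rw [← Real.le_log_iff_exp_le (norm_pos_iff.mpr (hne t))]
  linarith [neg_abs_le L]

lemma exists_norm_riemannXi_le_mul_exp_of_mem_ball :
    ∃ C : ℝ, 0 < C ∧ ∀ t : ℝ, ∀ z ∈ ball (5 / 2 + t * I) 2,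
      ‖riemannXi z‖ ≤ ‖riemannXi (5 / 2 + t * I)‖ * Real.exp (C * (1 + |t|) ^ 2) := by
  obtain ⟨C₁, hC₁, hlower⟩ := exists_exp_neg_le_norm_riemannXi_five_halves_add_mul_I
  obtain ⟨C₂, hC₂, hupper⟩ := exists_norm_riemannXi_le_exp (1 / 2) (9 / 2)
  refine ⟨9 * C₂ + C₁, by positivity, fun t z hz ↦ ?_⟩
  rw [mem_ball_iff_norm] at hz
  have hre := abs_le.mp ((abs_re_le_norm _).trans hz.le)
  have him := (abs_im_le_norm _).trans hz.le
  rw [sub_re, show ((5 / 2 : ℂ) + t * I).re = 5 / 2 by simp] at hre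
  rw [sub_im, show ((5 / 2 : ℂ) + t * I).im = t by simp] at him
  have him' : 1 + |z.im| ≤ 3 * (1 + |t|) := by
    linarith [abs_sub_abs_le_abs_sub z.im t, abs_nonneg t]
  calc ‖riemannXi z‖ ≤ Real.exp (C₂ * (3 * (1 + |t|)) ^ 2) := by
        refine (hupper z ⟨by linarith [hre.1], by linarith [hre.2]⟩).trans ?_
        gcongr
    _ = Real.exp (-(C₁ * (1 + |t|) ^ 2)) * Real.exp ((9 * C₂ + C₁) * (1 + |t|) ^ 2) := by
        rw [← Real.exp_add]
        ring_nf
    _ ≤ _ := by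
        gcongr
        exact hlower t

lemma exists_exp_neg_le_norm_riemannXi (hξ : ∀ s : ℂ, 1 / 2 < s.re → riemannXi s ≠ 0) {a : ℝ}
    (ha : 0 < a) : ∃ C : ℝ, 0 < C ∧ ∀ s : ℂ, s.re ∈ Set.Icc (1 / 2 + a) (9 / 2 - a) →
      Real.exp (-(C * (1 + |s.im|) ^ 2)) ≤ ‖riemannXi s‖ := by
  obtain ⟨C₁, hC₁, hcenter⟩ := exists_exp_neg_le_norm_riemannXi_five_halves_add_mul_I
  obtain ⟨C₂, hC₂, hball⟩ := exists_norm_riemannXi_le_mul_exp_of_mem_ball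
  refine ⟨C₁ + 4 * C₂ / a, by positivity, fun s hs ↦ ?_⟩
  set t := s.im with ht
  set c : ℂ := 5 / 2 + t * I with hc
  have hne (z : ℂ) (hz : z ∈ ball c 2) : riemannXi z ≠ 0 := by
    refine hξ z ?_
    have h := (abs_lt.mp ((abs_re_le_norm _).trans_lt (mem_ball_iff_norm.mp hz))).1
    rw [sub_re, show c.re = 5 / 2 by simp [hc]] at h
    linarith
  have hsc : ‖s - c‖ ≤ 2 - a := by
    have h : s - c = ((s.re - 5 / 2 : ℝ) : ℂ) := by
      apply Complex.ext <;> simp [hc, ht]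
    rw [h, norm_real, Real.norm_eq_abs, abs_le]
    constructor <;> linarith [hs.1, hs.2]
  have hs2 : s ∈ ball c 2 := by
    rw [mem_ball_iff_norm]
    linarith
  refine le_trans ?_ (mul_exp_neg_le_norm_of_norm_le_mul_exp (by positivity)
    differentiable_riemannXi.differentiableOn hne (hball t) hs2)
  calc Real.exp (-((C₁ + 4 * C₂ / a) * (1 + |t|) ^ 2))
      = Real.exp (-(C₁ * (1 + |t|) ^ 2)) *
          Real.exp (-(2 * (C₂ * (1 + |t|) ^ 2) * 2 / a)) := by
        rw [← Real.exp_add]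
        ring_nf
    _ ≤ _ := by
        gcongr
        · exact hcenter t
        · linarith
        · linarith

lemma norm_riemannXi_sub_ofReal_eq_of_re_eq_half {s : ℂ} (hs : s.re = 1 / 2) (a : ℝ) :
    ‖riemannXi (s - a)‖ = ‖riemannXi (s + a)‖ := by
  have h : conj (1 - (s - a)) = s + a := by
    apply Complex.ext
    · simp only [conj_re, sub_re, one_re, add_re, ofReal_re, hs]
      ring
    · simp
  rw [← riemannXi_one_sub, ← norm_conj, ← riemannXi_conj, h]

lemma exists_norm_riemannXi_div_le_exp_exp (hξ : ∀ s : ℂ, 1 / 2 < s.re → riemannXi s ≠ 0) {a : ℝ}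
    (ha : a ∈ Set.Ioc 0 (1 / 2)) :
    ∃ C : ℝ, ∀ s : ℂ, s.re ∈ Set.Icc (1 / 2) (5 / 2) →
      ‖riemannXi (s - a) / riemannXi (s + a)‖ ≤ Real.exp (C * Real.exp |s.im|) := by
  obtain ⟨C₁, hC₁, hlower⟩ := exists_exp_neg_le_norm_riemannXi hξ ha.1
  obtain ⟨C₂, hC₂, hupper⟩ := exists_norm_riemannXi_le_exp 0 (5 / 2)
  refine ⟨2 * (C₁ + C₂), fun s hs ↦ ?_⟩
  have hnum := hupper (s - a) (by
    rw [sub_re, ofReal_re]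
    constructor <;> linarith [hs.1, hs.2, ha.1, ha.2])
  have hden := hlower (s + a) (by
    rw [add_re, ofReal_re]
    constructor <;> linarith [hs.1, hs.2, ha.1, ha.2])
  rw [sub_im, ofReal_im, sub_zero] at hnum
  rw [add_im, ofReal_im, add_zero] at hden
  have hquad : (1 + |s.im|) ^ 2 ≤ 2 * Real.exp |s.im| := by
    nlinarith [Real.quadratic_le_exp_of_nonneg (abs_nonneg s.im)]
  rw [norm_div]
  calc _ ≤ Real.exp (C₂ * (1 + |s.im|) ^ 2) / Real.exp (-(C₁ * (1 + |s.im|) ^ 2)) := by gcongr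
    _ = Real.exp ((C₁ + C₂) * (1 + |s.im|) ^ 2) := by
        rw [← Real.exp_sub]
        ring_nf
    _ ≤ Real.exp ((C₁ + C₂) * (2 * Real.exp |s.im|)) := by gcongr
    _ = Real.exp (2 * (C₁ + C₂) * Real.exp |s.im|) := by ring_nf

lemma exists_norm_riemannXi_le_exp_mul_norm_add_ofReal :
    ∃ K : ℝ, 0 < K ∧ ∀ a : ℝ, 0 ≤ a → ∀ s : ℂ, 3 / 2 ≤ s.re →
      ‖riemannXi s‖ ≤ Real.exp (K * a) * ‖riemannXi (s + a)‖ := by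
  obtain ⟨K, hK, hF⟩ := exists_neg_le_re_logDeriv_riemannXi_of_three_halves_le_re
  refine ⟨K, hK, fun a ha s hs ↦ ?_⟩
  have hre {u : ℝ} (hu : u ∈ Set.Icc 0 a) : 3 / 2 ≤ (s + u).re := by
    rw [add_re, ofReal_re]
    linarith [hu.1]
  exact norm_le_exp_mul_norm_of_neg_le_re_logDeriv ha (fun u _ ↦ differentiable_riemannXi _)
    (fun u hu ↦ riemannXi_ne_zero_of_one_le_re (by linarith [hre hu])) (fun u hu ↦ hF _ (hre hu))

lemma exists_norm_riemannXi_sub_le_exp_mul (hξ : ∀ s : ℂ, 1 / 2 < s.re → riemannXi s ≠ 0) :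
    ∃ K : ℝ, 0 < K ∧ ∀ a ∈ Set.Ioc (0 : ℝ) (1 / 2), ∀ s : ℂ, s.re ∈ Set.Icc (1 / 2) (5 / 2) →
      ‖riemannXi (s - a)‖ ≤ Real.exp (2 * K * a) * ‖riemannXi (s + a)‖ := by
  obtain ⟨K, hK, hshift⟩ := exists_norm_riemannXi_le_exp_mul_norm_add_ofReal
  refine ⟨K, hK, fun a ha s hs ↦ ?_⟩
  obtain ⟨C, hC⟩ := exists_norm_riemannXi_div_le_exp_exp hξ ha
  have hne {z : ℂ} (hz : 1 / 2 ≤ z.re) : riemannXi (z + a) ≠ 0 :=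
    hξ _ (by
      rw [add_re, ofReal_re]
      linarith [ha.1])
  have hdiff : DifferentiableOn ℂ (fun z ↦ riemannXi (z - a) / riemannXi (z + a))
      (re ⁻¹' Set.Icc (1 / 2) (5 / 2)) := fun z hz ↦
    have := differentiable_riemannXi
    DifferentiableAt.differentiableWithinAt
      (DifferentiableAt.div (by fun_prop) (by fun_prop) (hne hz.1))
  have hleft (z : ℂ) (hz : z.re = 1 / 2) :
      ‖riemannXi (z - a) / riemannXi (z + a)‖ ≤ Real.exp (2 * K * a) := by
    rw [norm_div, norm_riemannXi_sub_ofReal_eq_of_re_eq_half hz,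
      div_self (norm_ne_zero_iff.mpr (hne hz.ge))]
    exact Real.one_le_exp (mul_nonneg (by positivity) ha.1.le)
  have hright (z : ℂ) (hz : z.re = 5 / 2) :
      ‖riemannXi (z - a) / riemannXi (z + a)‖ ≤ Real.exp (2 * K * a) := by
    have h := hshift (2 * a) (by linarith [ha.1]) (z - a) (by
      rw [sub_re, ofReal_re, hz]
      linarith [ha.2])
    rw [show K * (2 * a) = 2 * K * a by ring,
      show z - a + ((2 * a : ℝ) : ℂ) = z + a by push_cast; ring] at h
    rwa [norm_div, div_le_iff₀ (norm_pos_iff.mpr (hne (by linarith)))]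
  have hPL := norm_le_of_re_mem_Icc_of_norm_le_exp_exp (c := 1) (by norm_num) hdiff
    (by rw [lt_div_iff₀ (by norm_num)]; linarith [Real.pi_gt_three])
    (by simpa only [one_mul] using hC) hleft hright hs
  rwa [norm_div, div_le_iff₀ (norm_pos_iff.mpr (hne hs.1))] at hPL

lemma exists_neg_le_re_logDeriv_riemannXi (hξ : ∀ s : ℂ, 1 / 2 < s.re → riemannXi s ≠ 0) :
    ∃ K : ℝ, 0 < K ∧ ∀ s : ℂ, 1 / 2 < s.re → -K ≤ (logDeriv riemannXi s).re := by
  obtain ⟨K₁, hK₁, hright⟩ := exists_neg_le_re_logDeriv_riemannXi_of_three_halves_le_re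
  obtain ⟨K₂, hK₂, hstrip⟩ := exists_norm_riemannXi_sub_le_exp_mul hξ
  refine ⟨K₁ + K₂, by positivity, fun s hs ↦ ?_⟩
  rcases le_or_gt (3 / 2) s.re with h | h
  · linarith [hright s h]
  have hshift : -K₂ ≤ (logDeriv riemannXi s).re := by
    refine neg_le_re_logDeriv_of_norm_sub_le (differentiable_riemannXi s) (hξ s hs) ?_
    filter_upwards [Ioc_mem_nhdsGT one_half_pos] with a ha
    exact hstrip a ha s ⟨hs.le, by linarith⟩
  linarith

lemma exists_norm_logDeriv_riemannXi_mul_le (hξ : ∀ s : ℂ, 1 / 2 < s.re → riemannXi s ≠ 0) :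
    ∃ C : ℝ, 0 < C ∧ ∀ s : ℂ, s.re ∈ Set.Ioc (1 / 2) (3 / 2) →
      ‖logDeriv riemannXi s‖ * (s.re - 1 / 2) ≤ C * Real.log (2 + ‖s‖) := by
  obtain ⟨K₁, hK₁, hright⟩ := exists_norm_logDeriv_riemannXi_le
  obtain ⟨K₂, hK₂, hre⟩ := exists_neg_le_re_logDeriv_riemannXi hξ
  refine ⟨8 * K₂ + 8 * K₁, by positivity, fun s hs ↦ ?_⟩
  have hL := half_le_log_two_add (norm_nonneg s)
  have hball {z : ℂ} (hz : z ∈ ball (s + 1) (s.re + 1 / 2)) : 1 / 2 < z.re := by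
    have h := (abs_lt.mp ((abs_re_le_norm _).trans_lt (mem_ball_iff_norm.mp hz))).1
    rw [sub_re, add_re, one_re] at h
    linarith
  have hdiff : DifferentiableOn ℂ (logDeriv riemannXi) (ball (s + 1) (s.re + 1 / 2)) := fun z hz ↦
    ((differentiable_riemannXi.analyticAt z).deriv.differentiableAt.div
      (differentiable_riemannXi z) (hξ z (hball hz))).differentiableWithinAt
  have hnorm : ‖s - (s + 1)‖ = 1 := by
    rw [sub_add_cancel_left, norm_neg, norm_one]
  have hbound := norm_mul_sub_le_of_neg_le_re hK₂ hdiff (fun z hz ↦ hre z (hball hz))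
    (z := s) (by rw [mem_ball_iff_norm, hnorm]; linarith [hs.1])
  rw [hnorm, show s.re + 1 / 2 - 1 = s.re - 1 / 2 by ring] at hbound
  have hcenter : ‖logDeriv riemannXi (s + 1)‖ ≤ K₁ * (2 * Real.log (2 + ‖s‖)) := by
    refine (hright (s + 1) (by rw [add_re, one_re]; linarith [hs.1])).trans ?_
    gcongr
    refine le_trans ?_ (log_two_add_add_one_le (norm_nonneg s))
    gcongr
    exact norm_add_le_of_le le_rfl norm_one.le
  calc _ ≤ 2 * (s.re + 1 / 2) * (K₂ + ‖logDeriv riemannXi (s + 1)‖) := hbound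
    _ ≤ 2 * 2 * (K₂ * (2 * Real.log (2 + ‖s‖)) + K₁ * (2 * Real.log (2 + ‖s‖))) := by
        gcongr
        · linarith [hs.2]
        · exact le_mul_of_one_le_right hK₂.le (by linarith)
    _ = (8 * K₂ + 8 * K₁) * Real.log (2 + ‖s‖) := by ring

lemma norm_sub_one_le_norm {s : ℂ} (hs : 1 / 2 ≤ s.re) : ‖s - 1‖ ≤ ‖s‖ := by
  rw [← sq_le_sq₀ (norm_nonneg _) (norm_nonneg _), Complex.sq_norm, Complex.sq_norm,
    normSq_apply, normSq_apply, sub_re, sub_im, one_re, one_im]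
  nlinarith

lemma re_mul_sub_one_mul_le {s w : ℂ} {B : ℝ} (hs : 1 / 2 < s.re) (hw : -B ≤ w.re)
    (hw' : ‖w‖ * (s.re - 1 / 2) ≤ B) : (s * (s - 1) * w).re ≤ 5 * B * ‖s‖ ^ 2 := by
  -- On the critical line `s * (s - 1)` is the real number `-‖s‖ ^ 2`.
  have hsplit : s * (s - 1) = ((2 * s.re - 1 : ℝ) : ℂ) * s - ((‖s‖ ^ 2 : ℝ) : ℂ) := by
    rw [Complex.sq_norm, normSq_apply]
    apply Complex.ext
    · simp only [mul_re, sub_re, sub_im, one_re, one_im, ofReal_re, ofReal_im]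
      ring
    · simp only [mul_im, sub_re, sub_im, one_re, one_im, ofReal_re, ofReal_im]
      ring
  have hB : 0 ≤ B := le_trans (by positivity [sub_pos.mpr hs]) hw'
  have hs' : ‖s‖ ≤ 2 * ‖s‖ ^ 2 := by nlinarith [re_le_norm s]
  have hfirst : (((2 * s.re - 1 : ℝ) : ℂ) * s * w).re ≤ 4 * B * ‖s‖ ^ 2 := by
    calc (((2 * s.re - 1 : ℝ) : ℂ) * s * w).re ≤ ‖((2 * s.re - 1 : ℝ) : ℂ) * s * w‖ := re_le_norm _
      _ = 2 * (‖w‖ * (s.re - 1 / 2)) * ‖s‖ := by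
          rw [norm_mul, norm_mul, norm_real, Real.norm_of_nonneg (by linarith)]
          ring
      _ ≤ 2 * B * (2 * ‖s‖ ^ 2) := by gcongr
      _ = 4 * B * ‖s‖ ^ 2 := by ring
  have hsecond : -(‖s‖ ^ 2 * w.re) ≤ B * ‖s‖ ^ 2 := by nlinarith [sq_nonneg ‖s‖]
  rw [hsplit, sub_mul, sub_re, re_ofReal_mul]
  linarith

lemma exists_re_mul_logDeriv_riemannXi_le (hξ : ∀ s : ℂ, 1 / 2 < s.re → riemannXi s ≠ 0) :
    ∃ C : ℝ, 0 < C ∧ ∀ s : ℂ, s.re ∈ Set.Ioc (1 / 2) (3 / 2) →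
      (s * (s - 1) * logDeriv riemannXi s).re ≤ C * Real.log (2 + ‖s‖) * ‖s‖ ^ 2 := by
  obtain ⟨K, hK, hre⟩ := exists_neg_le_re_logDeriv_riemannXi hξ
  obtain ⟨C, hC, hnorm⟩ := exists_norm_logDeriv_riemannXi_mul_le hξ
  refine ⟨5 * (2 * K + C), by positivity, fun s hs ↦ ?_⟩
  have hL := half_le_log_two_add (norm_nonneg s)
  have hKL : K ≤ 2 * K * Real.log (2 + ‖s‖) := by nlinarith
  have hCL : 0 ≤ C * Real.log (2 + ‖s‖) := by positivity
  refine (re_mul_sub_one_mul_le (B := (2 * K + C) * Real.log (2 + ‖s‖)) hs.1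
    (by linarith [hre s hs.1]) (by linarith [hnorm s hs])).trans_eq ?_
  ring

lemma re_mul_sub_one_mul_le_sq_norm_mul_norm {s : ℂ} (hs : 1 / 2 ≤ s.re) (w : ℂ) :
    (s * (s - 1) * w).re ≤ ‖s‖ ^ 2 * ‖w‖ := by
  refine (re_le_norm _).trans ?_
  rw [norm_mul, norm_mul, sq]
  gcongr
  exact norm_sub_one_le_norm hs

lemma exists_re_mul_stirlingError_le_of_re_le (hξ : ∀ s : ℂ, 1 / 2 < s.re → riemannXi s ≠ 0) :
    ∃ C : ℝ, 0 < C ∧ ∀ s : ℂ, s.re ∈ Set.Ioc (1 / 2) (3 / 2) →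
      (s * (s - 1) * stirlingError s).re ≤ C * Real.log (2 + ‖s‖) * ‖s‖ ^ 2 := by
  obtain ⟨C, hC, hstrip⟩ := exists_re_mul_logDeriv_riemannXi_le hξ
  set D := |Real.log (2 * Real.pi)|
  refine ⟨C + 9 / 2 + D, by positivity, fun s hs ↦ ?_⟩
  have hL := half_le_log_two_add (norm_nonneg s)
  set L := Real.log (2 + ‖s‖)
  have hlog : ‖-((log s - Real.log (2 * Real.pi)) / 2)‖ ≤ (9 / 2 + D) * L := by
    have h : ‖log s - Real.log (2 * Real.pi)‖ ≤ 9 * L + D :=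
      norm_sub_le_of_le (norm_log_le_mul_log_two_add_norm (by linarith [re_le_norm s, hs.1]))
        (norm_real _).le
    rw [norm_neg, norm_div, Complex.norm_ofNat]
    nlinarith [abs_nonneg (Real.log (2 * Real.pi))]
  calc _ = (s * (s - 1) * logDeriv riemannXi s).re +
        (s * (s - 1) * -((log s - Real.log (2 * Real.pi)) / 2)).re := by
        rw [← add_re, ← mul_add, ← sub_eq_add_neg, stirlingError]
    _ ≤ C * L * ‖s‖ ^ 2 + ‖s‖ ^ 2 * ((9 / 2 + D) * L) :=
        add_le_add (hstrip s hs)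
          ((re_mul_sub_one_mul_le_sq_norm_mul_norm hs.1.le _).trans (by gcongr))
    _ = (C + 9 / 2 + D) * L * ‖s‖ ^ 2 := by ring

lemma exists_re_mul_stirlingError_le (hξ : ∀ s : ℂ, 1 / 2 < s.re → riemannXi s ≠ 0) :
    ∃ C : ℝ, 0 < C ∧ ∀ s : ℂ, 1 / 2 < s.re →
      (s * (s - 1) * stirlingError s).re ≤ C * Real.log (2 + ‖s‖) * (‖s‖ ^ 2 / s.re) := by
  obtain ⟨C₁, hC₁, hright⟩ := exists_norm_stirlingError_le
  obtain ⟨C₂, hC₂, hstrip⟩ := exists_re_mul_stirlingError_le_of_re_le hξ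
  refine ⟨2 * C₁ + 3 / 2 * C₂, by positivity, fun s hs ↦ ?_⟩
  have hL := half_le_log_two_add (norm_nonneg s)
  set L := Real.log (2 + ‖s‖)
  have hs0 : 0 < s.re := by linarith
  rcases le_or_gt (3 / 2) s.re with h | h
  · calc _ ≤ ‖s‖ ^ 2 * (C₁ / s.re) :=
          (re_mul_sub_one_mul_le_sq_norm_mul_norm hs.le _).trans (by gcongr; exact hright s h)
      _ = C₁ * (‖s‖ ^ 2 / s.re) := by ring
      _ ≤ _ := by
        gcongr
        nlinarith
  · have hs32 : ‖s‖ ^ 2 ≤ 3 / 2 * (‖s‖ ^ 2 / s.re) := by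
      rw [← mul_div_assoc, le_div_iff₀ hs0, mul_comm]
      gcongr
    calc _ ≤ C₂ * L * ‖s‖ ^ 2 := hstrip s ⟨hs, h.le⟩
      _ ≤ C₂ * L * (3 / 2 * (‖s‖ ^ 2 / s.re)) := by gcongr
      _ = 3 / 2 * C₂ * L * (‖s‖ ^ 2 / s.re) := by ring
      _ ≤ _ := by
        gcongr
        linarith

end CriticalLine

section MaclaurinCoefficients

open Metric ComplexConjugate

/-- The `n`-th Maclaurin coefficient `f⁽ⁿ⁾(0) / n!` of `f`. -/
noncomputable def maclaurinCoeff (f : ℂ → ℂ) (n : ℕ) : ℂ :=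
  iteratedDeriv n f 0 / n.factorial

lemma norm_circleAverage_le {E : Type*} [NormedAddCommGroup E] [NormedSpace ℝ E] (f : ℂ → E)
    (c : ℂ) (r : ℝ) : ‖Real.circleAverage f c r‖ ≤ Real.circleAverage (fun z ↦ ‖f z‖) c r := by
  rw [Real.circleAverage, Real.circleAverage, norm_smul, smul_eq_mul,
    Real.norm_of_nonneg (inv_nonneg.mpr Real.two_pi_pos.le)]
  gcongr
  exact intervalIntegral.norm_integral_le_integral_norm Real.two_pi_pos.le

section CircleAverage

variable {f : ℂ → ℂ} {r : ℝ} (hr : 0 < r) (hf : DifferentiableOn ℂ f (closedBall 0 r))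
include hr hf

lemma maclaurinCoeff_eq_circleAverage (n : ℕ) :
    maclaurinCoeff f n = Real.circleAverage (fun z ↦ (z ^ n)⁻¹ * f z) 0 r := by
  have hintegrand (z : ℂ) :
      (z - 0)⁻¹ • ((z ^ n)⁻¹ * f z) = (1 / (z - 0) ^ (n + 1)) • f z := by
    rw [smul_eq_mul, smul_eq_mul, sub_zero, one_div, pow_succ, mul_inv]
    ring
  rw [Real.circleAverage_eq_circleIntegral hr.ne', maclaurinCoeff]
  simp_rw [hintegrand]
  rw [hf.circleIntegral_one_div_sub_center_pow_smul hr n, smul_smul, smul_eq_mul]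
  field_simp [two_pi_I_ne_zero]

lemma circleAverage_pow_mul_eq_zero {n : ℕ} (hn : n ≠ 0) :
    Real.circleAverage (fun z ↦ z ^ n * f z) 0 r = 0 := by
  have h : DiffContOnCl ℂ (fun z ↦ z ^ n * f z) (ball 0 |r|) := by
    rw [abs_of_pos hr]
    exact DifferentiableOn.diffContOnCl
      ((DifferentiableOn.mul (by fun_prop) hf).mono closure_ball_subset_closedBall)
  rw [h.circleAverage, zero_pow hn, zero_mul]

lemma maclaurinCoeff_eq_circleAverage_re {n : ℕ} (hn : n ≠ 0) :
    maclaurinCoeff f n = Real.circleAverage (fun z ↦ (z ^ n)⁻¹ * (2 * (f z).re : ℝ)) 0 r := by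
  have hfc : ContinuousOn f (sphere 0 r) := hf.continuousOn.mono sphere_subset_closedBall
  have hne {z : ℂ} (hz : z ∈ sphere 0 r) : z ≠ 0 := ne_of_mem_sphere hz hr.ne'
  have hpow : ContinuousOn (fun z ↦ z ^ n * f z) (sphere 0 r) :=
    ContinuousOn.mul (by fun_prop) hfc
  have hinv : ContinuousOn (fun z ↦ (z ^ n)⁻¹ * f z) (sphere 0 r) :=
    ContinuousOn.mul (ContinuousOn.inv₀ (by fun_prop) fun z hz ↦ pow_ne_zero n (hne hz)) hfc
  have hzero : Real.circleAverage (fun z ↦ conj (z ^ n * f z)) 0 r = 0 := by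
    have h := conjCLE.toContinuousLinearMap.circleAverage_comp_comm
      (hpow.circleIntegrable hr.le)
    rw [circleAverage_pow_mul_eq_zero hr hf hn, map_zero] at h
    exact h
  have hsplit : Set.EqOn (fun z ↦ (z ^ n)⁻¹ * ((2 * (f z).re : ℝ) : ℂ))
      (fun z ↦ (z ^ n)⁻¹ * f z + ((r : ℂ) ^ (2 * n))⁻¹ • conj (z ^ n * f z)) (sphere 0 |r|) := by
    intro z hz
    rw [abs_of_pos hr] at hz
    have hz0 := hne hz
    have hr0 : (r : ℂ) ≠ 0 := ofReal_ne_zero.mpr hr.ne'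
    have hconj : conj z = (r : ℂ) ^ 2 * z⁻¹ := by
      rw [eq_mul_inv_iff_mul_eq₀ hz0, mul_comm, mul_conj', mem_sphere_zero_iff_norm.mp hz]
    simp only [← add_conj, map_mul, map_pow, hconj, mul_pow, smul_eq_mul, pow_mul, inv_pow]
    field_simp
  rw [Real.circleAverage_congr_sphere hsplit, Real.circleAverage_fun_add
    (hinv.circleIntegrable hr.le) ?_, Real.circleAverage_fun_smul, hzero, smul_zero, add_zero,
    maclaurinCoeff_eq_circleAverage hr hf]
  exact ((continuous_conj.comp_continuousOn hpow).circleIntegrable hr.le).const_smul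

lemma circleAverage_re_eq : Real.circleAverage (fun z ↦ (f z).re) 0 r = (f 0).re := by
  have h : DiffContOnCl ℂ f (ball 0 |r|) := by
    rw [abs_of_pos hr]
    exact (hf.mono closure_ball_subset_closedBall).diffContOnCl
  rw [← h.circleAverage]
  exact reCLM.circleAverage_comp_comm
    ((hf.continuousOn.mono sphere_subset_closedBall).circleIntegrable hr.le)

lemma norm_maclaurinCoeff_mul_pow_le {m : ℂ → ℝ} (hm : CircleIntegrable m 0 r)
    (hm0 : ∀ z ∈ sphere 0 r, 0 ≤ m z) (hre : ∀ z ∈ sphere 0 r, (f z).re ≤ m z) {n : ℕ}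
    (hn : n ≠ 0) :
    ‖maclaurinCoeff f n‖ * r ^ n ≤ 4 * Real.circleAverage m 0 r - 2 * (f 0).re := by
  have hfc : ContinuousOn f (sphere 0 r) := hf.continuousOn.mono sphere_subset_closedBall
  have hreint : CircleIntegrable (fun z ↦ (f z).re) 0 r :=
    (continuous_re.comp_continuousOn hfc).circleIntegrable hr.le
  have hnorm : Set.EqOn (fun z ↦ ‖(z ^ n)⁻¹ * ((2 * (f z).re : ℝ) : ℂ)‖)
      (fun z ↦ (2 * (r ^ n)⁻¹) • |(f z).re|) (sphere 0 |r|) := by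
    intro z hz
    rw [abs_of_pos hr] at hz
    simp only [norm_mul, norm_inv, norm_pow, mem_sphere_zero_iff_norm.mp hz, norm_real,
      Real.norm_eq_abs, abs_two, smul_eq_mul]
    ring
  have habs : Real.circleAverage (fun z ↦ |(f z).re|) 0 r
      ≤ Real.circleAverage ((2 : ℝ) • m - fun z ↦ (f z).re) 0 r := by
    refine Real.circleAverage_mono
      ((continuous_re.comp_continuousOn hfc).abs.circleIntegrable hr.le)
      (hm.const_smul.sub hreint) fun z hz ↦ ?_
    rw [abs_of_pos hr] at hz
    simp only [Pi.sub_apply, Pi.smul_apply, smul_eq_mul]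
    exact abs_le.mpr ⟨by linarith [hm0 z hz], by linarith [hre z hz]⟩
  rw [Real.circleAverage_sub hm.const_smul hreint, Real.circleAverage_smul,
    circleAverage_re_eq hr hf, smul_eq_mul] at habs
  calc ‖maclaurinCoeff f n‖ * r ^ n
      ≤ 2 * (r ^ n)⁻¹ * Real.circleAverage (fun z ↦ |(f z).re|) 0 r * r ^ n := by
        gcongr
        rw [maclaurinCoeff_eq_circleAverage_re hr hf hn]
        refine (norm_circleAverage_le _ _ _).trans_eq ?_
        rw [Real.circleAverage_congr_sphere hnorm, Real.circleAverage_fun_smul, smul_eq_mul]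
    _ = 2 * Real.circleAverage (fun z ↦ |(f z).re|) 0 r := by field_simp
    _ ≤ 4 * Real.circleAverage m 0 r - 2 * (f 0).re := by linarith

end CircleAverage

lemma circleAverage_one_div_one_sub_re {r : ℝ} (hr : r ∈ Set.Ioo 0 1) :
    Real.circleAverage (fun z ↦ 1 / (1 - z.re)) 0 r = 1 / Real.sqrt (1 - r ^ 2) := by
  set δ := Real.sqrt (1 - r ^ 2)
  have hδ : δ ^ 2 = 1 - r ^ 2 := Real.sq_sqrt (by nlinarith [hr.1, hr.2])
  have hδ0 : 0 < δ := Real.sqrt_pos.mpr (by nlinarith [hr.1, hr.2])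
  have hδ1 : δ < 1 := by nlinarith [hr.1]
  have hw : ((1 - δ : ℝ) : ℂ) ∈ ball (0 : ℂ) r := by
    rw [mem_ball_zero_iff, norm_real, Real.norm_of_nonneg (by linarith)]
    nlinarith [hr.1]
  have hpoisson :
      Real.circleAverage (poissonKernel 0 ((1 - δ : ℝ) : ℂ) • fun _ ↦ (1 : ℝ)) 0 r = 1 :=
    InnerProductSpace.harmonicContOnCl_const.circleAverage_poissonKernel_smul hw
  have hkernel : Set.EqOn (fun z : ℂ ↦ 1 / (1 - z.re))
      (δ⁻¹ • (poissonKernel 0 ((1 - δ : ℝ) : ℂ) • fun _ ↦ (1 : ℝ))) (sphere 0 |r|) := by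
    intro z hz
    rw [abs_of_pos hr.1, mem_sphere_zero_iff_norm] at hz
    have hdist : ‖z - ((1 - δ : ℝ) : ℂ)‖ ^ 2 = 2 * (1 - δ) * (1 - z.re) := by
      have hsq : z.re * z.re + z.im * z.im = r ^ 2 := by
        rw [← hz, Complex.sq_norm, normSq_apply]
      rw [Complex.sq_norm, normSq_apply, sub_re, sub_im, ofReal_re, ofReal_im]
      linear_combination hsq + hδ
    have hre : 1 - z.re ≠ 0 := by linarith [re_le_norm z, hr.2]
    have hδ' : 1 - δ ≠ 0 := by linarith
    simp only [Pi.smul_apply, Pi.mul_apply, smul_eq_mul, poissonKernel_def, sub_zero, hdist, hz,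
      norm_real, Real.norm_eq_abs, sq_abs, mul_one]
    rw [show r ^ 2 - (1 - δ) ^ 2 = 2 * δ * (1 - δ) by linear_combination hδ]
    field_simp
  rw [Real.circleAverage_congr_sphere hkernel, Real.circleAverage_smul, hpoisson, smul_eq_mul,
    mul_one, one_div]

lemma one_sub_re_pos_of_mem_sphere {r : ℝ} (hr : r < 1) {z : ℂ} (hz : z ∈ sphere 0 r) :
    0 < 1 - z.re := by
  linarith [re_le_norm z, mem_sphere_zero_iff_norm.mp hz]

lemma circleIntegrable_one_div_one_sub_re {r : ℝ} (hr : r ∈ Set.Ioo 0 1) :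
    CircleIntegrable (fun z ↦ 1 / (1 - z.re)) 0 r :=
  ContinuousOn.circleIntegrable hr.1.le (ContinuousOn.div (by fun_prop) (by fun_prop)
    fun _ hz ↦ (one_sub_re_pos_of_mem_sphere hr.2 hz).ne')

lemma three_quarters_le_pow {r : ℝ} {n : ℕ} (hn : n ≠ 0) (hr0 : 0 ≤ r)
    (hr : r ^ 2 = 1 - 1 / (4 * n)) : 3 / 4 ≤ r ^ n := by
  have hn1 : (1 : ℝ) ≤ n := Nat.one_le_cast.mpr (Nat.one_le_iff_ne_zero.mpr hn)
  have hr1 : r ≤ 1 := by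
    have : 0 ≤ 1 / (4 * (n : ℝ)) := by positivity
    nlinarith
  have hr2 : 1 / (4 * (n : ℝ)) ≤ 1 := by
    nlinarith
  calc 3 / 4 = 1 + n * -(1 / (4 * (n : ℝ))) := by
        field_simp
        norm_num
    _ ≤ (1 + -(1 / (4 * (n : ℝ)))) ^ n := one_add_mul_le_pow (by linarith) n
    _ = (r ^ n) ^ 2 := by rw [← sub_eq_add_neg, ← hr, pow_right_comm]
    _ ≤ r ^ n := pow_le_of_le_one (by positivity) (pow_le_one₀ hr0 hr1) two_ne_zero

lemma one_div_sqrt_one_sub_sq {r : ℝ} {n : ℕ} (hr : r ^ 2 = 1 - 1 / (4 * n)) :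
    1 / Real.sqrt (1 - r ^ 2) = 2 * Real.sqrt n := by
  have h : 1 - r ^ 2 = (2 * Real.sqrt n)⁻¹ ^ 2 := by
    rw [hr, inv_pow, mul_pow, Real.sq_sqrt n.cast_nonneg]
    ring
  rw [h, Real.sqrt_sq (by positivity), one_div, inv_inv]

lemma half_le_log_natCast {n : ℕ} (hn : 2 ≤ n) : 1 / 2 ≤ Real.log n := by
  have h := Real.log_le_log two_pos (Nat.ofNat_le_cast.mpr hn)
  linarith [Real.log_two_gt_d9]

lemma half_le_sqrt_mul_log {n : ℕ} (hn : 2 ≤ n) : 1 / 2 ≤ Real.sqrt n * Real.log n := by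
  have h : 1 ≤ Real.sqrt n := Real.one_le_sqrt.mpr (Nat.one_le_cast.mpr (by lia))
  nlinarith [half_le_log_natCast hn]

lemma log_two_add_norm_one_div_one_sub_le {n : ℕ} (hn : 2 ≤ n) {z : ℂ}
    (hz : ‖z‖ ^ 2 = 1 - 1 / (4 * n)) : Real.log (2 + ‖1 / (1 - z)‖) ≤ 5 * Real.log n := by
  have hn2 : (2 : ℝ) ≤ n := Nat.ofNat_le_cast.mpr hn
  have hdist : 1 / (8 * n) ≤ ‖1 - z‖ := by
    have h := norm_sub_norm_le 1 z
    rw [norm_one] at h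
    refine le_trans ?_ h
    have hhalf : 1 / (4 * (n : ℝ)) = 2 * (1 / (8 * n)) := by
      field_simp
      norm_num
    nlinarith [sq_nonneg (‖z‖ - 1)]
  have hnorm : ‖1 / (1 - z)‖ ≤ 8 * n := by
    rw [norm_div, norm_one]
    exact (one_div_le (by positivity) (lt_of_lt_of_le (by positivity) hdist)).mp hdist
  have hpow : (2 : ℝ) + 8 * n ≤ n ^ 5 := by
    have : (2 : ℝ) ^ 4 ≤ n ^ 4 := by gcongr
    nlinarith
  calc Real.log (2 + ‖1 / (1 - z)‖) ≤ Real.log ((n : ℝ) ^ 5) :=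
        Real.log_le_log (by positivity) (by linarith)
    _ = 5 * Real.log n := by
        rw [Real.log_pow]
        norm_num

lemma exists_norm_maclaurinCoeff_le {H : ℂ → ℂ} (hH : DifferentiableOn ℂ H (ball 0 1)) {C : ℝ}
    (hC : 0 < C)
    (hre : ∀ z ∈ ball 0 1, (H z).re ≤ C * Real.log (2 + ‖1 / (1 - z)‖) * (1 / (1 - z.re))) :
    ∃ C' : ℝ, 0 < C' ∧ ∀ n : ℕ, 2 ≤ n →
      ‖maclaurinCoeff H n‖ ≤ C' * Real.sqrt n * Real.log n := by
  refine ⟨54 * C + 6 * ‖H 0‖, by positivity, fun n hn ↦ ?_⟩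
  have hn2 : (2 : ℝ) ≤ n := Nat.ofNat_le_cast.mpr hn
  have hL := half_le_log_natCast hn
  have hδ : 1 / (4 * (n : ℝ)) < 1 := by
    rw [div_lt_one (by positivity)]
    linarith
  have hδ0 : 0 < 1 / (4 * (n : ℝ)) := by positivity
  set r := Real.sqrt (1 - 1 / (4 * n))
  have hr : r ^ 2 = 1 - 1 / (4 * n) := Real.sq_sqrt (by linarith)
  have hr0 : 0 < r := Real.sqrt_pos.mpr (by linarith)
  have hr1 : r < 1 := by nlinarith
  have hsub : closedBall (0 : ℂ) r ⊆ ball 0 1 := closedBall_subset_ball hr1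
  have hbound {z : ℂ} (hz : z ∈ sphere 0 r) :
      (H z).re ≤ (5 * C * Real.log n) • (1 / (1 - z.re)) := by
    have hpos := one_sub_re_pos_of_mem_sphere hr1 hz
    have hlog := log_two_add_norm_one_div_one_sub_le hn (z := z)
      (by rw [mem_sphere_zero_iff_norm.mp hz, hr])
    refine (hre z (hsub (sphere_subset_closedBall hz))).trans ?_
    rw [smul_eq_mul, show 5 * C * Real.log n = C * (5 * Real.log n) by ring]
    gcongr
  have hcoeff := norm_maclaurinCoeff_mul_pow_le (m := fun z ↦ (5 * C * Real.log n) •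
    (1 / (1 - z.re))) hr0 (hH.mono hsub)
    (circleIntegrable_one_div_one_sub_re ⟨hr0, hr1⟩).const_smul
    (fun z hz ↦ smul_nonneg (by positivity)
      (one_div_nonneg.mpr (one_sub_re_pos_of_mem_sphere hr1 hz).le))
    (fun z hz ↦ hbound hz) (show n ≠ 0 by lia)
  rw [Real.circleAverage_fun_smul, circleAverage_one_div_one_sub_re ⟨hr0, hr1⟩,
    one_div_sqrt_one_sub_sq hr, smul_eq_mul] at hcoeff
  have hpow := three_quarters_le_pow (by lia) hr0.le hr
  have hH0 := neg_le_of_abs_le (abs_re_le_norm (H 0))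
  nlinarith [half_le_sqrt_mul_log hn, norm_nonneg (maclaurinCoeff H n), norm_nonneg (H 0)]

end MaclaurinCoefficients

section LiCoefficients

open Filter Topology Metric

lemma maclaurinCoeff_eq_of_eventually_hasSum {f : ℂ → ℂ} {a : ℕ → ℂ}
    (h : ∀ᶠ z in 𝓝 0, HasSum (fun n ↦ a n * z ^ n) (f z)) (n : ℕ) : maclaurinCoeff f n = a n := by
  have hseries : HasFPowerSeriesAt f (FormalMultilinearSeries.ofScalars ℂ a) 0 := by
    rw [hasFPowerSeriesAt_iff]
    filter_upwards [h] with z hz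
    simpa only [FormalMultilinearSeries.coeff_ofScalars, smul_eq_mul, zero_add, mul_comm] using hz
  have heq := congrArg (fun p ↦ p.coeff n)
    (hseries.analyticAt.hasFPowerSeriesAt.eq_formalMultilinearSeries hseries)
  simpa only [maclaurinCoeff, FormalMultilinearSeries.coeff_ofScalars] using heq

lemma maclaurinCoeff_add {f g : ℂ → ℂ} (hf : AnalyticAt ℂ f 0) (hg : AnalyticAt ℂ g 0) (n : ℕ) :
    maclaurinCoeff (f + g) n = maclaurinCoeff f n + maclaurinCoeff g n := by
  rw [maclaurinCoeff, iteratedDeriv_add hf.contDiffAt hg.contDiffAt, add_div, maclaurinCoeff,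
    maclaurinCoeff]

lemma maclaurinCoeff_congr {f g : ℂ → ℂ} (h : f =ᶠ[𝓝 0] g) (n : ℕ) :
    maclaurinCoeff f n = maclaurinCoeff g n := by
  rw [maclaurinCoeff, h.iteratedDeriv_eq, maclaurinCoeff]

lemma deriv_id_mul {h : ℂ → ℂ} {x : ℂ} (hh : DifferentiableAt ℂ h x) :
    deriv (fun s ↦ s * h s) x = h x + x * deriv h x := by
  rw [deriv_fun_mul differentiableAt_fun_id hh, deriv_id'', one_mul]

lemma iteratedDeriv_succ_id_mul {h : ℂ → ℂ} {x : ℂ} (hh : AnalyticAt ℂ h x) (k : ℕ) :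
    iteratedDeriv (k + 1) (fun s ↦ s * h s) x =
      x * iteratedDeriv (k + 1) h x + (k + 1) * iteratedDeriv k h x := by
  induction k generalizing h with
  | zero => rw [zero_add, iteratedDeriv_one, iteratedDeriv_one, iteratedDeriv_zero,
      deriv_id_mul hh.differentiableAt, Nat.cast_zero, zero_add, one_mul, add_comm]
  | succ k ih =>
    have hderiv : deriv (fun s ↦ s * h s) =ᶠ[𝓝 x] fun s ↦ h s + s * deriv h s := by
      filter_upwards [hh.eventually_analyticAt] with y hy using deriv_id_mul hy.differentiableAt
    have hmul : AnalyticAt ℂ (fun s ↦ s * deriv h s) x := analyticAt_id.mul hh.deriv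
    rw [iteratedDeriv_succ', hderiv.iteratedDeriv_eq,
      iteratedDeriv_fun_add hh.contDiffAt hmul.contDiffAt, ih hh.deriv, ← iteratedDeriv_succ',
      ← iteratedDeriv_succ']
    push_cast
    ring

lemma maclaurinCoeff_id_mul_deriv {f : ℂ → ℂ} (hf : AnalyticAt ℂ f 0) (n : ℕ) :
    maclaurinCoeff (fun z ↦ z * deriv f z) n = n * maclaurinCoeff f n := by
  cases n with
  | zero => simp [maclaurinCoeff]
  | succ k =>
    rw [maclaurinCoeff, iteratedDeriv_succ_id_mul hf.deriv, zero_mul, zero_add,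
      ← iteratedDeriv_succ', maclaurinCoeff, mul_div_assoc, Nat.cast_add_one]

lemma hasDerivAt_one_div_one_sub {z : ℂ} (hz : z ≠ 1) :
    HasDerivAt (fun z : ℂ ↦ 1 / (1 - z)) ((1 / (1 - z)) ^ 2) z := by
  have h := ((hasDerivAt_id z).const_sub 1).fun_inv (sub_ne_zero.mpr hz.symm)
  simp only [id, neg_neg, ← one_div] at h
  rwa [one_div_pow]

lemma analyticAt_one_div_one_sub : AnalyticAt ℂ (fun z : ℂ ↦ 1 / (1 - z)) 0 :=
  analyticAt_const.div (analyticAt_const.sub analyticAt_id) (by simp)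

lemma tendsto_one_div_one_sub : Tendsto (fun z : ℂ ↦ 1 / (1 - z)) (𝓝 0) (𝓝 1) := by
  simpa using analyticAt_one_div_one_sub.continuousAt.tendsto

lemma eventually_iteratedDeriv_comp_one_div_one_sub {g : ℂ → ℂ} (hg : AnalyticAt ℂ g 1) (m : ℕ) :
    ∀ᶠ z in 𝓝 (0 : ℂ), iteratedDeriv (m + 1) (fun z ↦ g (1 / (1 - z))) z =
      (1 / (1 - z)) ^ (m + 2) * iteratedDeriv (m + 1) (fun s ↦ s ^ m * g s) (1 / (1 - z)) := by
  have hana := tendsto_one_div_one_sub.eventually hg.eventually_analyticAt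
  have hne : ∀ᶠ z : ℂ in 𝓝 0, z ≠ 1 := eventually_ne_nhds zero_ne_one
  induction m with
  | zero =>
    filter_upwards [hana, hne] with z hz hz1
    simp only [zero_add, iteratedDeriv_one, pow_zero, one_mul]
    rw [mul_comm]
    exact (hz.differentiableAt.hasDerivAt.comp z (hasDerivAt_one_div_one_sub hz1)).deriv
  | succ m ih =>
    filter_upwards [hana, hne, ih.eventually_nhds] with z hz hz1 hih
    have hpow : AnalyticAt ℂ (fun s ↦ s ^ m * g s) (1 / (1 - z)) := (analyticAt_id.pow m).mul hz
    have hdiff :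
        DifferentiableAt ℂ (iteratedDeriv (m + 1) (fun s ↦ s ^ m * g s)) (1 / (1 - z)) := by
      rw [iteratedDeriv_eq_iterate]
      exact (hpow.iterated_deriv (m + 1)).differentiableAt
    have hφ := hasDerivAt_one_div_one_sub hz1
    have hprod := (hφ.fun_pow (m + 2)).fun_mul (hdiff.hasDerivAt.comp z hφ)
    have hsucc : (fun s ↦ s ^ (m + 1) * g s) = fun s ↦ s * (s ^ m * g s) := by
      ext s
      ring
    rw [iteratedDeriv_succ, EventuallyEq.deriv_eq hih, hsucc, iteratedDeriv_succ_id_mul hpow]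
    refine hprod.deriv.trans ?_
    rw [iteratedDeriv_succ (n := m + 1), Function.comp_apply]
    push_cast
    ring

lemma liCoeff_eq_mul_maclaurinCoeff (n : ℕ) :
    liCoeff n = n * maclaurinCoeff (fun z ↦ log (riemannXi (1 / (1 - z)))) n := by
  obtain _ | m := n
  · rw [liCoeff, iteratedDeriv_zero, riemannXi_one, log_one, mul_zero, mul_zero, Nat.cast_zero,
      zero_mul]
  have hlog : AnalyticAt ℂ (fun s ↦ log (riemannXi s)) 1 :=
    (differentiable_riemannXi.analyticAt 1).clog (by
      rw [riemannXi_one]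
      exact one_mem_slitPlane)
  have hcomp := (eventually_iteratedDeriv_comp_one_div_one_sub hlog m).self_of_nhds
  simp only [sub_zero, div_one, one_pow, one_mul] at hcomp
  rw [maclaurinCoeff, hcomp, liCoeff, Nat.add_sub_cancel, Nat.factorial_succ]
  push_cast
  field_simp [Nat.cast_add_one_ne_zero m, Nat.factorial_ne_zero m]

lemma liCoeff_eq_maclaurinCoeff_logDeriv (n : ℕ) :
    liCoeff n =
      maclaurinCoeff (fun z ↦ z / (1 - z) ^ 2 * logDeriv riemannXi (1 / (1 - z))) n := by
  have hslit : ∀ᶠ z : ℂ in 𝓝 0, riemannXi (1 / (1 - z)) ∈ slitPlane := by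
    refine tendsto_one_div_one_sub.eventually
      ((differentiable_riemannXi 1).continuousAt.eventually_mem (isOpen_slitPlane.mem_nhds ?_))
    rw [riemannXi_one]
    exact one_mem_slitPlane
  have hana : AnalyticAt ℂ (fun z ↦ log (riemannXi (1 / (1 - z)))) 0 :=
    ((differentiable_riemannXi.analyticAt _).comp analyticAt_one_div_one_sub).clog
      hslit.self_of_nhds
  rw [liCoeff_eq_mul_maclaurinCoeff, ← maclaurinCoeff_id_mul_deriv hana]
  refine maclaurinCoeff_congr ?_ n
  filter_upwards [hslit, eventually_ne_nhds zero_ne_one] with z hz hz1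
  have hderiv := (((differentiable_riemannXi _).hasDerivAt.comp z
    (hasDerivAt_one_div_one_sub hz1)).clog hz).deriv
  rw [logDeriv_apply, div_eq_mul_one_div z, ← one_div_pow]
  refine (congrArg (z * ·) hderiv).trans ?_
  rw [Function.comp_apply]
  ring

lemma sum_antidiagonal_div_eq (n : ℕ) :
    ∑ p ∈ Finset.HasAntidiagonal.antidiagonal n, (p.2 : ℂ) / p.1 = n * (harmonic n : ℚ) - n := by
  have hterm (i : ℕ) (hi : i ∈ Finset.range n) :
      ((n - (i + 1) : ℕ) : ℂ) / (i + 1 : ℕ) = n * ((i + 1 : ℕ) : ℂ)⁻¹ - 1 := by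
    rw [Nat.cast_sub (Finset.mem_range.mp hi), sub_div,
      div_self (Nat.cast_ne_zero.mpr i.succ_ne_zero), div_eq_mul_inv]
  rw [Finset.Nat.sum_antidiagonal_eq_sum_range_succ_mk, Finset.sum_range_succ', Nat.cast_zero,
    div_zero, add_zero, Finset.sum_congr rfl hterm, Finset.sum_sub_distrib, ← Finset.mul_sum,
    Finset.sum_const, Finset.card_range, nsmul_one, harmonic]
  push_cast
  rfl

lemma hasSum_div_one_sub_sq_mul_neg_log {z : ℂ} (hz : ‖z‖ < 1) :
    HasSum (fun n : ℕ ↦ (n * (harmonic n : ℚ) - n) * z ^ n)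
      (z / (1 - z) ^ 2 * -log (1 - z)) := by
  have hlog := hasSum_taylorSeries_neg_log hz
  have hid := hasSum_coe_mul_geometric_of_norm_lt_one hz
  have hcauchy := (summable_norm_sum_mul_antidiagonal_of_summable_norm hlog.summable.norm
    hid.summable.norm).of_norm.hasSum
  rw [← tsum_mul_tsum_eq_tsum_sum_antidiagonal_of_summable_norm hlog.summable.norm
    hid.summable.norm, hlog.tsum_eq, hid.tsum_eq, mul_comm] at hcauchy
  refine hcauchy.congr_fun fun n ↦ ?_
  rw [← sum_antidiagonal_div_eq, Finset.sum_mul]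
  refine Finset.sum_congr rfl fun p hp ↦ ?_
  rw [← Finset.HasAntidiagonal.mem_antidiagonal.mp hp, pow_add]
  ring

lemma log_one_div_one_sub {z : ℂ} (hz : ‖z‖ < 1) : log (1 / (1 - z)) = -log (1 - z) := by
  rw [one_div, log_inv]
  refine slitPlane_arg_ne_pi (Or.inl ?_)
  rw [sub_re, one_re]
  linarith [re_le_norm z]

lemma maclaurinCoeff_stirling_main_term (n : ℕ) :
    maclaurinCoeff (fun z ↦
      z / (1 - z) ^ 2 * ((log (1 / (1 - z)) - Real.log (2 * Real.pi)) / 2)) n =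
      (n * (harmonic n : ℚ) - n) / 2 - Real.log (2 * Real.pi) / 2 * n := by
  refine maclaurinCoeff_eq_of_eventually_hasSum (a := fun n ↦
    (n * (harmonic n : ℚ) - n) / 2 - Real.log (2 * Real.pi) / 2 * n) ?_ n
  filter_upwards [ball_mem_nhds (0 : ℂ) one_pos] with z hz
  rw [mem_ball_zero_iff] at hz
  have hsum := ((hasSum_div_one_sub_sq_mul_neg_log hz).mul_left (1 / 2)).sub
    ((hasSum_coe_mul_geometric_of_norm_lt_one hz).mul_left (Real.log (2 * Real.pi) / 2 : ℂ))
  convert! hsum using 1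
  · ext n
    ring
  · rw [log_one_div_one_sub hz]
    ring

lemma ne_one_of_norm_lt_one {z : ℂ} (hz : ‖z‖ < 1) : z ≠ 1 := by
  rintro rfl
  exact hz.ne norm_one

lemma half_lt_re_one_div_one_sub {z : ℂ} (hz : ‖z‖ < 1) : 1 / 2 < (1 / (1 - z)).re := by
  have hsq : z.re * z.re + z.im * z.im < 1 := by
    rw [← normSq_apply, ← Complex.sq_norm]
    nlinarith [norm_nonneg z]
  rw [one_div (1 - z), inv_re, lt_div_iff₀ (normSq_pos.mpr (sub_ne_zero.mpr
    (ne_one_of_norm_lt_one hz).symm)), normSq_apply, sub_re, sub_im, one_re, one_im]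
  nlinarith

lemma norm_sq_div_re_inv {w : ℂ} (hw : w ≠ 0) : ‖w⁻¹‖ ^ 2 / (w⁻¹).re = 1 / w.re := by
  rw [Complex.sq_norm, normSq_inv, inv_re, ← one_div,
    div_div_div_cancel_right₀ (normSq_pos.mpr hw).ne']

lemma one_div_one_sub_mul_sub_one {z : ℂ} (hz : z ≠ 1) :
    1 / (1 - z) * (1 / (1 - z) - 1) = z / (1 - z) ^ 2 := by
  have : 1 - z ≠ 0 := sub_ne_zero.mpr hz.symm
  field_simp
  ring

lemma analyticAt_stirlingError {s : ℂ} (hs : s ∈ slitPlane) (hξ : riemannXi s ≠ 0) :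
    AnalyticAt ℂ stirlingError s :=
  have hana := differentiable_riemannXi.analyticAt s
  (hana.deriv.div hana hξ).sub ((analyticAt_clog hs).sub analyticAt_const).div_const

lemma differentiableOn_stirling_remainder (hξ : ∀ s : ℂ, 1 / 2 < s.re → riemannXi s ≠ 0) :
    DifferentiableOn ℂ (fun z ↦ z / (1 - z) ^ 2 * stirlingError (1 / (1 - z))) (ball 0 1) := by
  intro z hz
  rw [mem_ball_zero_iff] at hz
  have hz1 := ne_one_of_norm_lt_one hz
  have hs := half_lt_re_one_div_one_sub hz
  have hE := (analyticAt_stirlingError (Or.inl (by linarith))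
    (hξ _ hs)).differentiableAt.fun_comp' z (hasDerivAt_one_div_one_sub hz1).differentiableAt
  exact (DifferentiableAt.mul (by fun_prop (disch := grind)) hE).differentiableWithinAt

lemma liCoeff_eq_stirling_remainder_add (n : ℕ) :
    liCoeff n = maclaurinCoeff (fun z ↦ z / (1 - z) ^ 2 * stirlingError (1 / (1 - z))) n +
      ((n * (harmonic n : ℚ) - n) / 2 - Real.log (2 * Real.pi) / 2 * n) := by
  have hfactor : AnalyticAt ℂ (fun z : ℂ ↦ z / (1 - z) ^ 2) 0 :=
    analyticAt_id.div ((analyticAt_const.sub analyticAt_id).pow 2) (by simp)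
  have hlog : AnalyticAt ℂ (fun z : ℂ ↦ log (1 / (1 - z))) 0 :=
    analyticAt_one_div_one_sub.clog (by simp)
  have hE : AnalyticAt ℂ (fun z : ℂ ↦ stirlingError (1 / (1 - z))) 0 := by
    refine AnalyticAt.comp (g := stirlingError) ?_ analyticAt_one_div_one_sub
    rw [sub_zero, div_one]
    exact analyticAt_stirlingError one_mem_slitPlane (by simp [riemannXi_one])
  have hmain : AnalyticAt ℂ (fun z : ℂ ↦
      z / (1 - z) ^ 2 * ((log (1 / (1 - z)) - Real.log (2 * Real.pi)) / 2)) 0 :=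
    hfactor.fun_mul (hlog.fun_sub analyticAt_const).div_const
  rw [liCoeff_eq_maclaurinCoeff_logDeriv, ← maclaurinCoeff_stirling_main_term,
    ← maclaurinCoeff_add (hfactor.fun_mul hE) hmain]
  congr 1
  ext z
  rw [logDeriv_riemannXi_eq_stirlingError_add, mul_add, Pi.add_apply]

lemma exists_norm_maclaurinCoeff_stirling_remainder_le
    (hξ : ∀ s : ℂ, 1 / 2 < s.re → riemannXi s ≠ 0) :
    ∃ C : ℝ, 0 < C ∧ ∀ n : ℕ, 2 ≤ n →
      ‖maclaurinCoeff (fun z ↦ z / (1 - z) ^ 2 * stirlingError (1 / (1 - z))) n‖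
        ≤ C * Real.sqrt n * Real.log n := by
  obtain ⟨C, hC, hE⟩ := exists_re_mul_stirlingError_le hξ
  refine exists_norm_maclaurinCoeff_le (differentiableOn_stirling_remainder hξ) hC fun z hz ↦ ?_
  rw [mem_ball_zero_iff] at hz
  have hz1 := ne_one_of_norm_lt_one hz
  have h := hE _ (half_lt_re_one_div_one_sub hz)
  rw [one_div_one_sub_mul_sub_one hz1] at h
  have hratio := norm_sq_div_re_inv (sub_ne_zero.mpr hz1.symm)
  rw [← one_div, sub_re, one_re] at hratio
  rwa [hratio] at h

lemma abs_mul_harmonic_sub_log_sub_eulerMascheroniConstant_le {n : ℕ} (hn : n ≠ 0) :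
    |n * (harmonic n - Real.log n - Real.eulerMascheroniConstant)| ≤ 1 := by
  have hn0 : (0 : ℝ) < n := Nat.cast_pos.mpr (Nat.pos_of_ne_zero hn)
  have hlower := Real.eulerMascheroniConstant_lt_eulerMascheroniSeq' n
  have hupper := Real.eulerMascheroniSeq_lt_eulerMascheroniConstant n
  rw [Real.eulerMascheroniSeq', if_neg hn] at hlower
  rw [Real.eulerMascheroniSeq] at hupper
  have hlog : Real.log (n + 1) ≤ Real.log n + 1 / n := by
    have h := Real.log_le_sub_one_of_pos (x := (n + 1) / n) (by positivity)
    rw [Real.log_div (by positivity) hn0.ne', add_div, div_self hn0.ne'] at h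
    linarith
  rw [abs_of_nonneg (mul_nonneg hn0.le (by linarith)), ← le_div_iff₀' hn0]
  linarith

end LiCoefficients

/-- **Voros's asymptotic under RH** (Theorem 4.1 for `F = ζ`): assuming the Riemann
Hypothesis, `λ_n = (n/2) log n + ((γ-1)/2 - (1/2) log(2π)) n + O(√n log n)`. -/
theorem li_coeff_asymptotics
    (RH : ∀ s : ℂ, 0 < s.re → s.re < 1 → riemannZeta s = 0 → s.re = 1 / 2) :
    ∃ C : ℝ, 0 < C ∧ ∀ n : ℕ, 2 ≤ n →
      ‖liCoeff n - ((((n : ℝ) / 2) * Real.log n +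
          ((Real.eulerMascheroniConstant - 1) / 2 -
            (1 / 2) * Real.log (2 * Real.pi)) * n : ℝ) : ℂ)‖ ≤
        C * Real.sqrt n * Real.log n := by
  obtain ⟨C, hC, hremainder⟩ := exists_norm_maclaurinCoeff_stirling_remainder_le
    fun s ↦ riemannXi_ne_zero_of_half_lt_re RH
  refine ⟨C + 1, by positivity, fun n hn ↦ ?_⟩
  have hharmonic : ‖((n * (harmonic n - Real.log n - Real.eulerMascheroniConstant) : ℝ) : ℂ) / 2‖
      ≤ Real.sqrt n * Real.log n := by
    rw [norm_div, norm_real, Real.norm_eq_abs, Complex.norm_ofNat]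
    linarith [abs_mul_harmonic_sub_log_sub_eulerMascheroniConstant_le (show n ≠ 0 by lia),
      half_le_sqrt_mul_log hn]
  have hsum := norm_add_le_of_le (hremainder n hn) hharmonic
  refine (hsum.trans' (le_of_eq (congrArg _ ?_))).trans_eq (by ring)
  rw [liCoeff_eq_stirling_remainder_add]
  push_cast
  ring
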